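/- There exist constants C, c > 0 such that the following holds. If the partition is balanced, k ≥ 2, and n ≥ C·k²·p·(log n)¹²/(p−q)², then for every vertex u ∈ V, with probability at least 1 − c·n^{−2} over the choice of E, ‖(φ(Ĝ) − φ(G))·E_u‖ ≤ 7·10⁶·(√(kp)·(log n)² + 1/log n). -/

import Mathlib

open MeasureTheory ProbabilityTheory Matrix Finset

namespace SBM

/-- Euclidean norm of a vector. -/
noncomputable def enorm {m : Type*} [Fintype m] (x : m → ℝ) : ℝ :=
  Real.sqrt (∑ i, x i ^ 2)

/-- Spectral (ℓ²-operator) norm of a matrix. -/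
noncomputable def specNorm {n : ℕ} (A : Matrix (Fin n) (Fin n) ℝ) : ℝ :=
  ‖Matrix.toEuclideanCLM (𝕜 := ℝ) A‖

/-- The `2 → ∞` norm: maximal Euclidean norm of a row. -/
noncomputable def n2i {n : ℕ} (A : Matrix (Fin n) (Fin n) ℝ) : ℝ :=
  ⨆ i : Fin n, enorm (A i)

/-- The mean matrix `G` of the SSBM with cluster assignment `cl`. -/
def meanMatrix (n k : ℕ) (p q : ℝ) (cl : Fin n → Fin k) : Matrix (Fin n) (Fin n) ℝ :=
  Matrix.of fun u v => if cl u = cl v then p else q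

/-- The size of cluster `i`. -/
def clusterSize {n k : ℕ} (cl : Fin n → Fin k) (i : Fin k) : ℕ :=
  (Finset.univ.filter fun v => cl v = i).card

/-- The partition is balanced: every cluster size is within a `1 ± 1/(16 log n)` factor
of `n / k`. -/
noncomputable def Balanced (n k : ℕ) (cl : Fin n → Fin k) : Prop :=
  ∀ i : Fin k,
    (1 - 1 / (16 * Real.log n)) * ((n : ℝ) / k) ≤ (clusterSize cl i : ℝ) ∧
    (clusterSize cl i : ℝ) ≤ (1 + 1 / (16 * Real.log n)) * ((n : ℝ) / k)

/-- `lam, v` is a spectral decomposition of `A`: eigenvalues in non-increasing order with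
an orthonormal eigenbasis. -/
def IsSpectralDecomp {n : ℕ} (A : Matrix (Fin n) (Fin n) ℝ)
    (lam : Fin n → ℝ) (v : Fin n → Fin n → ℝ) : Prop :=
  Antitone lam ∧
  (∀ i j, dotProduct (v i) (v j) = if i = j then (1 : ℝ) else 0) ∧
  A = ∑ i, lam i • Matrix.vecMulVec (v i) (v i)

/-- Orthogonal projection onto the span of the top `k` eigenvectors `v 0, …, v (k-1)`. -/
noncomputable def projTop {n : ℕ} (k : ℕ) (v : Fin n → Fin n → ℝ) :
    Matrix (Fin n) (Fin n) ℝ :=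
  ∑ i ∈ Finset.univ.filter (fun i : Fin n => (i : ℕ) < k), Matrix.vecMulVec (v i) (v i)

/-- The column of `A` indexed by `u`. -/
def column {n : ℕ} (A : Matrix (Fin n) (Fin n) ℝ) (u : Fin n) : Fin n → ℝ :=
  fun i => A i u

/-- `ψ(M) = A·M² + B·M` where `A = -1/(λ₁μ)`, `B = 1/λ₁ + 1/μ`. -/
noncomputable def psiM {n : ℕ} (lam1 mu : ℝ) (M : Matrix (Fin n) (Fin n) ℝ) :
    Matrix (Fin n) (Fin n) ℝ :=
  (-(1 / (lam1 * mu))) • (M * M) + (1 / lam1 + 1 / mu) • M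

/-- `φ(M) = ψ(M)^r`. -/
noncomputable def phiM {n : ℕ} (lam1 mu : ℝ) (r : ℕ) (M : Matrix (Fin n) (Fin n) ℝ) :
    Matrix (Fin n) (Fin n) ℝ :=
  psiM lam1 mu M ^ r

/-- `ψ(t) = A·t² + B·t` where `A = -1/(λ₁μ)`, `B = 1/λ₁ + 1/μ`. -/
noncomputable def psiR (lam1 mu t : ℝ) : ℝ :=
  (-(1 / (lam1 * mu))) * t ^ 2 + (1 / lam1 + 1 / mu) * t

/-- `φ(t) = ψ(t)^r`. -/
noncomputable def phiR (lam1 mu : ℝ) (r : ℕ) (t : ℝ) : ℝ := psiR lam1 mu t ^ r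

end SBM

namespace SBM

/-- The SSBM noise model: `E` is a random symmetric matrix whose upper-triangular entries
are independent, with `E_{uv} = 1 − G_{uv}` with probability `G_{uv}` and
`E_{uv} = −G_{uv}` with probability `1 − G_{uv}`, where `G` is the mean matrix. -/
def NoiseModel {Ω : Type*} [MeasureSpace Ω] {n k : ℕ} (p q : ℝ) (cl : Fin n → Fin k)
    (E : Ω → Matrix (Fin n) (Fin n) ℝ) : Prop :=
  (∀ ω, (E ω).IsSymm) ∧
  (∀ u v : Fin n, Measurable fun ω => E ω u v) ∧
  iIndepFun (m := fun _ : {e : Fin n × Fin n // e.1 ≤ e.2} => (inferInstance : MeasurableSpace ℝ))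
    (fun e ω => E ω e.1.1 e.1.2) ℙ ∧
  (∀ u v : Fin n, u ≤ v →
    Measure.map (fun ω => E ω u v) ℙ =
      ENNReal.ofReal (meanMatrix n k p q cl u v) •
        Measure.dirac (1 - meanMatrix n k p q cl u v) +
      ENNReal.ofReal (1 - meanMatrix n k p q cl u v) •
        Measure.dirac (-(meanMatrix n k p q cl u v)))

end SBM

namespace SBM

/-- Walks avoiding `u`: vectors. -/
noncomputable def aV {n : ℕ} (E : Matrix (Fin n) (Fin n) ℝ) (u : Fin n) (x : Fin n → ℝ) :
    ℕ → Fin n → ℝ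
  | 0 => Function.update x u 0
  | (j + 1) => Function.update (E *ᵥ aV E u x j) u 0

/-- Walks leaving `u` and never returning. -/
noncomputable def kap {n : ℕ} (E : Matrix (Fin n) (Fin n) ℝ) (u : Fin n) (x : Fin n → ℝ) :
    ℕ → ℝ
  | 0 => x u
  | (j + 1) => (E *ᵥ aV E u x j) u

lemma aV_self {n : ℕ} (E : Matrix (Fin n) (Fin n) ℝ) (u : Fin n) (x : Fin n → ℝ) (j : ℕ) :
    aV E u x j u = 0 := by
  cases j <;> simp [aV]

lemma walk_decomp {n : ℕ} (E : Matrix (Fin n) (Fin n) ℝ) (u : Fin n) (x : Fin n → ℝ) (j : ℕ) :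
    (E ^ j) *ᵥ x = aV E u x j + ∑ m ∈ range (j + 1), kap E u x (j - m) • (fun v => (E ^ m) v u) := by
  induction j with
  | zero =>
    ext v
    by_cases h : v = u
    · subst h; simp [aV, kap]
    · simp [aV, kap, h, Matrix.one_apply]
  | succ j ih =>
    have h1 : (E ^ (j + 1)) *ᵥ x = E *ᵥ ((E ^ j) *ᵥ x) := by
      rw [Matrix.mulVec_mulVec, ← pow_succ']
    rw [h1, ih, Matrix.mulVec_add]
    have h2 : E *ᵥ aV E u x j = aV E u x (j + 1) + kap E u x (j + 1) • (fun v => (E ^ 0) v u) := by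
      ext v
      by_cases h : v = u
      · subst h; simp [aV, kap]
      · simp [aV, kap, h, Matrix.one_apply]
    have h3 : E *ᵥ (∑ m ∈ range (j + 1), kap E u x (j - m) • (fun v => (E ^ m) v u)) =
        ∑ m ∈ range (j + 1), kap E u x (j + 1 - (m + 1)) • (fun v => (E ^ (m + 1)) v u) := by
      rw [Matrix.mulVec_sum]
      refine Finset.sum_congr rfl fun m _ => ?_
      rw [Matrix.mulVec_smul, Nat.add_sub_add_right]
      congr 1
      ext v
      rw [pow_succ', Matrix.mul_apply]
      rfl
    rw [h2, h3, Finset.sum_range_succ' _ (j + 1), add_assoc]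
    congr 1
    rw [add_comm]
    rfl

lemma walk_decomp_apply {n : ℕ} (E : Matrix (Fin n) (Fin n) ℝ) (u v : Fin n) (x : Fin n → ℝ)
    (j : ℕ) :
    ((E ^ (j + 1)) *ᵥ x) v = aV E u x (j + 1) v + (if v = u then kap E u x (j + 1) else 0) +
      ∑ m ∈ range j, kap E u x (j - m) * (E ^ (m + 1)) v u + x u * (E ^ (j + 1)) v u := by
  rw [walk_decomp E u x (j + 1)]
  rw [Finset.sum_range_succ, Finset.sum_range_succ']
  simp only [Pi.add_apply, Finset.sum_apply, Pi.smul_apply, smul_eq_mul]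
  simp only [Nat.add_sub_add_right, Nat.sub_zero, pow_zero, Nat.sub_self, Matrix.one_apply]
  simp only [kap]
  split_ifs <;> ring

/-- Entry bound for the `(m+1)`-th power. -/
def Ent {n : ℕ} (E : Matrix (Fin n) (Fin n) ℝ) (τ b β : ℝ) (m : ℕ) : Prop :=
  ∀ u v : Fin n, |(E ^ (m + 1)) v u| ≤ τ * (if v = u then b else 1) * β ^ m

/-- Bound for `kap` -/
def KB {n : ℕ} (E : Matrix (Fin n) (Fin n) ℝ) (x : Fin n → ℝ) (σ τ β : ℝ) (m : ℕ) : Prop :=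
  ∀ u : Fin n, |kap E u x (m + 1)| ≤ σ * (τ / 2) * β ^ m

lemma mid_sum_bound {n : ℕ} {E : Matrix (Fin n) (Fin n) ℝ} {x : Fin n → ℝ} {σ τ b β : ℝ} {j : ℕ}
    (hσ : 0 ≤ σ) (hτ : 0 ≤ τ) (hb : 1 ≤ b) (hβ : j * τ * b ≤ β)
    (hE : ∀ m < j, Ent E τ b β m) (hK : ∀ m < j, KB E x σ τ β m) (u v : Fin n) :
    |∑ m ∈ range j, kap E u x (j - m) * (E ^ (m + 1)) v u| ≤ σ * (τ / 2) * β ^ j := by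
  have hβ0 : 0 ≤ β := le_trans (by positivity) hβ
  rcases j with _ | j
  · simp; positivity
  refine (Finset.abs_sum_le_sum_abs _ _).trans ?_
  have : ∀ m ∈ range (j + 1), |kap E u x (j + 1 - m) * (E ^ (m + 1)) v u| ≤
      (σ * (τ / 2)) * (τ * b) * β ^ j := by
    intro m hm
    rw [Finset.mem_range] at hm
    rw [abs_mul]
    have e : j + 1 - m = (j - m) + 1 := by omega
    have h1 := hK (j - m) (by omega) u
    have h2 := hE m hm u v
    rw [e]
    have h3 : τ * (if v = u then b else 1) * β ^ m ≤ τ * b * β ^ m := by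
      gcongr
      split_ifs <;> linarith
    calc _ ≤ (σ * (τ / 2) * β ^ (j - m)) * (τ * b * β ^ m) := by
          gcongr
          exact h2.trans h3
      _ = (σ * (τ / 2)) * (τ * b) * (β ^ (j - m) * β ^ m) := by ring
      _ = _ := by rw [← pow_add]; congr 2; omega
  refine (Finset.sum_le_sum this).trans ?_
  rw [Finset.sum_const, Finset.card_range, nsmul_eq_mul]
  calc _ = σ * (τ / 2) * (((j + 1 : ℕ) : ℝ) * τ * b) * β ^ j := by ring
    _ ≤ σ * (τ / 2) * β * β ^ j := by gcongr
    _ = _ := by ring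

lemma f_bound {n : ℕ} {E : Matrix (Fin n) (Fin n) ℝ} {x : Fin n → ℝ} {σ τ b β : ℝ} {j : ℕ}
    (hσ : 0 ≤ σ) (hτ : 0 ≤ τ) (hb : 1 ≤ b) (hβ : j * τ * b ≤ β)
    (hE : ∀ m < j, Ent E τ b β m) (hK : ∀ m ≤ j, KB E x σ τ β m) (u : Fin n) :
    |((E ^ (j + 1)) *ᵥ x) u| ≤ σ * τ * β ^ j + |x u| * |(E ^ (j + 1)) u u| := by
  rw [walk_decomp_apply E u u x j, aV_self, if_pos rfl, ← abs_mul]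
  have h1 := mid_sum_bound hσ hτ hb hβ hE (fun m hm => hK m hm.le) u u
  have h2 := hK j le_rfl u
  refine (abs_add_le _ _).trans ?_
  refine add_le_add ((abs_add_le _ _).trans ?_) le_rfl
  rw [zero_add]
  linarith

lemma a_bound {n : ℕ} {E : Matrix (Fin n) (Fin n) ℝ} {x : Fin n → ℝ} {σ τ b β : ℝ} {j : ℕ}
    (hσ : 1 ≤ σ) (hτ : 0 ≤ τ) (hb : 1 ≤ b) (hβ : j * τ * b ≤ β) (hx : ∀ v, x v = 0 ∨ x v = 1)
    (hE : ∀ m ≤ j, Ent E τ b β m) (hK : ∀ m ≤ j, KB E x σ τ β m) (u v : Fin n) :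
    |aV E u x (j + 1) v| ≤ τ * (5 / 2 * σ + b * x v) * β ^ j := by
  have hβ0 : 0 ≤ β := le_trans (by positivity) hβ
  have hxv : 0 ≤ x v := by rcases hx v with h | h <;> simp [h]
  have hxu : |x u| ≤ 1 := by rcases hx u with h | h <;> simp [h]
  by_cases h : v = u
  · subst h; rw [aV_self, abs_zero]; positivity
  have h0 := walk_decomp_apply E u v x j
  rw [if_neg h, add_zero] at h0
  have h1 := mid_sum_bound (by linarith) hτ hb hβ (fun m hm => hE m hm.le)
    (fun m hm => hK m hm.le) u v
  have h2 := f_bound (by linarith) hτ hb hβ (fun m hm => hE m hm.le) hK v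
  have h3 := hE j le_rfl u v
  have h4 := hE j le_rfl v v
  rw [if_neg h] at h3
  rw [if_pos rfl] at h4
  have h5 : |x u * (E ^ (j + 1)) v u| ≤ τ * β ^ j := by
    rw [abs_mul]
    calc _ ≤ 1 * (τ * 1 * β ^ j) := by gcongr
      _ = _ := by ring
  have h6 : |x v| * |(E ^ (j + 1)) v v| ≤ x v * (τ * b * β ^ j) := by
    rw [abs_of_nonneg hxv]; gcongr
  have e : aV E u x (j + 1) v = ((E ^ (j + 1)) *ᵥ x) v -
      ∑ m ∈ range j, kap E u x (j - m) * (E ^ (m + 1)) v u - x u * (E ^ (j + 1)) v u := by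
    rw [h0]; ring
  rw [e]
  have h7 : τ * β ^ j ≤ σ * (τ * β ^ j) := le_mul_of_one_le_left (by positivity) hσ
  have h8 : |((E ^ (j + 1)) *ᵥ x) v| ≤ σ * τ * β ^ j + x v * (τ * b * β ^ j) := by linarith
  rw [abs_le] at h1 h5 h8 ⊢
  constructor <;> linarith

/-- The scale in the Bernstein event. -/
noncomputable def Sc (σ τ b β : ℝ) : ℕ → ℝ
  | 0 => σ
  | (j + 1) => 4 * τ * σ * b * β ^ j

/-- The (deterministic form of the) Bernstein event. -/
def Bern {n : ℕ} (E : Matrix (Fin n) (Fin n) ℝ) (u : Fin n) (x : Fin n → ℝ) (p L S : ℝ) (j : ℕ) :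
    Prop :=
  (∀ v, |aV E u x j v| ≤ S) → p * ∑ v, (aV E u x j v) ^ 2 ≤ L * S ^ 2 →
    |kap E u x (j + 1)| ≤ 8 * L * S

lemma K_step {n : ℕ} {E : Matrix (Fin n) (Fin n) ℝ} {x : Fin n → ℝ} {σ τ b β p L : ℝ} {j : ℕ}
    (hL : 1 ≤ L) (hp : 0 ≤ p) (hbp : b ^ 2 = n * p)
    (hσ : 1 ≤ σ) (hτ : τ = 32 * L) (hb : 1 ≤ b) (hβ : j * τ * b ≤ β) (hβ2 : 64 * L * b ≤ β)
    (hx : ∀ v, x v = 0 ∨ x v = 1) (hxσ : p * ∑ v, x v ^ 2 ≤ σ ^ 2)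
    (hE : ∀ m < j, Ent E τ b β m) (hK : ∀ m < j, KB E x σ τ β m)
    (hB : ∀ u, Bern E u x p L (Sc σ τ b β j) j) : KB E x σ τ β j := by
  intro u
  have hτ0 : 0 ≤ τ := by rw [hτ]; linarith
  have hβ0 : 0 ≤ β := le_trans (by positivity) hβ2
  have hx0 : ∀ v, 0 ≤ x v := fun v => by rcases hx v with h | h <;> simp [h]
  have hx1 : ∀ v, x v ≤ 1 := fun v => by rcases hx v with h | h <;> simp [h]
  rcases j with _ | j
  · have h1 := hB u ?_ ?_
    · simp only [Sc] at h1
      refine h1.trans ?_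
      rw [hτ, pow_zero]
      nlinarith
    · intro v
      simp only [Sc, aV, Function.update_apply]
      split_ifs
      · simp; linarith
      · rw [abs_of_nonneg (hx0 v)]; exact (hx1 v).trans hσ
    · simp only [Sc]
      have : ∑ v, (aV E u x 0 v) ^ 2 ≤ ∑ v, x v ^ 2 := by
        refine Finset.sum_le_sum fun v _ => ?_
        simp only [aV, Function.update_apply]
        split_ifs
        · simpa using sq_nonneg (x v)
        · exact le_rfl
      calc _ ≤ p * ∑ v, x v ^ 2 := by gcongr
        _ ≤ σ ^ 2 := hxσ
        _ ≤ L * σ ^ 2 := le_mul_of_one_le_left (by positivity) hL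
  · have hβj : (j : ℝ) * τ * b ≤ β := by
      refine le_trans ?_ hβ
      gcongr
      simp
    have ha := a_bound hσ hτ0 hb hβj hx (fun m hm => hE m (by omega)) (fun m hm => hK m (by omega)) u
    have h1 := hB u ?_ ?_
    · refine h1.trans ?_
      simp only [Sc]
      calc _ = (64 * L * b) * (σ * (τ / 2) * β ^ j) := by ring
        _ ≤ β * (σ * (τ / 2) * β ^ j) := by gcongr
        _ = _ := by ring
    · intro v
      refine (ha v).trans ?_
      simp only [Sc]
      have : 5 / 2 * σ + b * x v ≤ 4 * (σ * b) := by
        have : b * x v ≤ b := mul_le_of_le_one_right (by linarith) (hx1 v)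
        nlinarith
      calc _ ≤ τ * (4 * (σ * b)) * β ^ j := by gcongr
        _ = _ := by ring
    · simp only [Sc]
      have h2 : ∀ v, (aV E u x (j + 1) v) ^ 2 ≤
          (τ * β ^ j) ^ 2 * (2 * (25 / 4 * σ ^ 2) + 2 * b ^ 2 * x v ^ 2) := by
        intro v
        have h3 := ha v
        have h4 : (aV E u x (j + 1) v) ^ 2 ≤ (τ * (5 / 2 * σ + b * x v) * β ^ j) ^ 2 := by
          rw [← sq_abs]
          gcongr
        refine h4.trans ?_
        have : (5 / 2 * σ + b * x v) ^ 2 ≤ 2 * (25 / 4 * σ ^ 2) + 2 * b ^ 2 * x v ^ 2 := by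
          nlinarith [sq_nonneg (5 / 2 * σ - b * x v)]
        calc _ = (τ * β ^ j) ^ 2 * (5 / 2 * σ + b * x v) ^ 2 := by ring
          _ ≤ _ := by gcongr
      calc p * ∑ v, (aV E u x (j + 1) v) ^ 2
          ≤ p * ∑ v, (τ * β ^ j) ^ 2 * (2 * (25 / 4 * σ ^ 2) + 2 * b ^ 2 * x v ^ 2) := by
            gcongr with v _
            exact h2 v
        _ = (τ * β ^ j) ^ 2 * (2 * (25 / 4 * σ ^ 2) * (n * p) + 2 * b ^ 2 * (p * ∑ v, x v ^ 2)) := by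
            rw [← Finset.mul_sum, Finset.sum_add_distrib]
            simp only [Finset.sum_const, Finset.card_univ, Fintype.card_fin, nsmul_eq_mul,
              ← Finset.mul_sum]
            ring
        _ ≤ (τ * β ^ j) ^ 2 * (2 * (25 / 4 * σ ^ 2) * b ^ 2 + 2 * b ^ 2 * σ ^ 2) := by
            rw [hbp]; gcongr
        _ ≤ (τ * β ^ j) ^ 2 * (16 * σ ^ 2 * b ^ 2) := by
            gcongr
            nlinarith [mul_nonneg (sq_nonneg σ) (sq_nonneg b)]
        _ = 1 * (4 * τ * σ * b * β ^ j) ^ 2 := by ring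
        _ ≤ _ := by gcongr

lemma diag_step {n : ℕ} {E : Matrix (Fin n) (Fin n) ℝ} {τ b β : ℝ} {j : ℕ}
    (hτ : 0 ≤ τ) (hb : 1 ≤ b) (hβ : 5 * b ≤ β) (h1 : ∀ u, ∑ v, |E u v| ≤ 4 * b ^ 2)
    (h0 : ∀ u v, |E u v| ≤ 1) (hE : Ent E τ b β j) (u : Fin n) :
    |(E ^ (j + 2)) u u| ≤ τ * b * β ^ (j + 1) := by
  have hβ0 : 0 ≤ β := le_trans (by positivity) hβ
  rw [show j + 2 = (j + 1) + 1 from rfl, pow_succ', Matrix.mul_apply]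
  have h2 : ∀ v, |E u v * (E ^ (j + 1)) v u| ≤
      |E u v| * (τ * β ^ j) + (if v = u then τ * b * β ^ j else 0) := by
    intro v
    rw [abs_mul]
    have h3 := hE u v
    split_ifs with h
    · rw [if_pos h] at h3
      have : |E u v| * |(E ^ (j + 1)) v u| ≤ 1 * (τ * b * β ^ j) := by
        gcongr
        exact h0 u v
      have h5 : 0 ≤ |E u v| * (τ * β ^ j) := by positivity
      linarith
    · rw [if_neg h] at h3
      rw [add_zero]
      gcongr
      linarith
  calc _ ≤ ∑ v, |E u v * (E ^ (j + 1)) v u| := Finset.abs_sum_le_sum_abs _ _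
    _ ≤ ∑ v, (|E u v| * (τ * β ^ j) + (if v = u then τ * b * β ^ j else 0)) :=
        Finset.sum_le_sum fun v _ => h2 v
    _ = (∑ v, |E u v|) * (τ * β ^ j) + τ * b * β ^ j := by
        rw [Finset.sum_add_distrib, ← Finset.sum_mul]; simp
    _ ≤ (4 * b ^ 2) * (τ * β ^ j) + τ * b * β ^ j := by gcongr; exact h1 u
    _ ≤ (5 * b) * (τ * b * β ^ j) := by
        have : τ * b * β ^ j ≤ b * (τ * b * β ^ j) := le_mul_of_one_le_left (by positivity) hb
        nlinarith
    _ ≤ β * (τ * b * β ^ j) := by gcongr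
    _ = _ := by ring

/-- indicator basis vector -/
def bas {n : ℕ} (v : Fin n) : Fin n → ℝ := fun w => if w = v then 1 else 0

lemma ent_all {n : ℕ} {E : Matrix (Fin n) (Fin n) ℝ} {τ b β p L : ℝ} {J : ℕ}
    (hL : 1 ≤ L) (hp : 0 ≤ p) (hp1 : p ≤ 1) (hbp : b ^ 2 = n * p)
    (hτ : τ = 32 * L) (hb : 1 ≤ b) (hβ : J * τ * b ≤ β) (hβ2 : 64 * L * b ≤ β)
    (h1 : ∀ u, ∑ v, |E u v| ≤ 4 * b ^ 2)
    (h0 : ∀ u v, |E u v| ≤ 1)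
    (hB : ∀ w, ∀ j ≤ J, ∀ u, Bern E u (bas w) p L (Sc 1 τ b β j) j) :
    ∀ j ≤ J, Ent E τ b β j := by
  have hτ0 : 0 ≤ τ := by rw [hτ]; linarith
  have hβ0 : 0 ≤ β := le_trans (by positivity) hβ2
  have hβ5 : 5 * b ≤ β := le_trans (by nlinarith) hβ2
  have key : ∀ j ≤ J, (∀ m ≤ j, Ent E τ b β m) ∧ (∀ w, ∀ m ≤ j, KB E (bas w) 1 τ β m) := by
    intro j
    induction j with
    | zero =>
      intro _
      refine ⟨?_, ?_⟩
      · intro m hm u v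
        obtain rfl : m = 0 := by omega
        rw [zero_add, pow_one, pow_zero, mul_one]
        refine (h0 v u).trans ?_
        have : (1:ℝ) ≤ if v = u then b else 1 := by split_ifs <;> linarith
        nlinarith
      · intro w m hm
        obtain rfl : m = 0 := by omega
        refine K_step hL hp hbp le_rfl hτ hb (by simpa using hβ0) hβ2 ?_ ?_ ?_ ?_ (hB w 0 (by omega))
        · intro v; unfold bas; split_ifs <;> simp
        · simp [bas, hp1]
        · intro m hm; omega
        · intro m hm; omega
    | succ j ih =>
      intro hj
      obtain ⟨ihE, ihK⟩ := ih (by omega)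
      have hcast : ((j + 1 : ℕ) : ℝ) * τ * b ≤ β := by
        refine le_trans ?_ hβ
        gcongr
      have hK : ∀ w, KB E (bas w) 1 τ β (j + 1) := by
        intro w
        refine K_step hL hp hbp le_rfl hτ hb hcast hβ2 ?_ ?_ ?_ ?_ (hB w (j + 1) hj)
        · intro v; unfold bas; split_ifs <;> simp
        · simp [bas, hp1]
        · intro m hm; exact ihE m (by omega)
        · intro m hm; exact ihK w m (by omega)
      have hK' : ∀ w, ∀ m ≤ j + 1, KB E (bas w) 1 τ β m := by
        intro w m hm
        rcases Nat.lt_or_ge j m with h | h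
        · obtain rfl : m = j + 1 := by omega
          exact hK w
        · exact ihK w m h
      refine ⟨?_, hK'⟩
      intro m hm
      rcases Nat.lt_or_ge j m with h | h
      swap
      · exact ihE m h
      obtain rfl : m = j + 1 := by omega
      intro u v
      by_cases huv : v = u
      · subst huv
        rw [if_pos rfl]
        exact diag_step hτ0 hb hβ5 h1 h0 (ihE j le_rfl) v
      · rw [if_neg huv]
        have h2 := f_bound (x := bas u) zero_le_one hτ0 hb hcast
          (fun m hm => ihE m (by omega)) (hK' u) v
        have h3 : ((E ^ (j + 1 + 1)) *ᵥ (bas u)) v = (E ^ (j + 1 + 1)) v u := by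
          simp [Matrix.mulVec, dotProduct, bas]
        rw [h3] at h2
        simpa [bas, huv] using h2
  exact fun j hj => (key j hj).1 j le_rfl

lemma f_all {n : ℕ} {E : Matrix (Fin n) (Fin n) ℝ} {x : Fin n → ℝ} {σ τ b β p L : ℝ} {J : ℕ}
    (hL : 1 ≤ L) (hp : 0 ≤ p) (hbp : b ^ 2 = n * p) (hσ : 1 ≤ σ)
    (hτ : τ = 32 * L) (hb : 1 ≤ b) (hβ : J * τ * b ≤ β) (hβ2 : 64 * L * b ≤ β)
    (hx : ∀ v, x v = 0 ∨ x v = 1) (hxσ : p * ∑ v, x v ^ 2 ≤ σ ^ 2)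
    (hE : ∀ j ≤ J, Ent E τ b β j)
    (hB : ∀ j ≤ J, ∀ u, Bern E u x p L (Sc σ τ b β j) j) (j : ℕ) (hj : j ≤ J) (u : Fin n) :
    |((E ^ (j + 1)) *ᵥ x) u| ≤ τ * (σ + b * x u) * β ^ j := by
  have hτ0 : 0 ≤ τ := by rw [hτ]; linarith
  have hβ0 : 0 ≤ β := le_trans (by positivity) hβ2
  have hcast : ∀ j ≤ J, (j : ℝ) * τ * b ≤ β := by
    intro j hj
    refine le_trans ?_ hβ
    gcongr
  have hK : ∀ j ≤ J, KB E x σ τ β j := by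
    intro j
    induction j using Nat.strong_induction_on with
    | _ j ih =>
      intro hj
      exact K_step hL hp hbp hσ hτ hb (hcast j hj) hβ2 hx hxσ (fun m hm => hE m (by omega))
        (fun m hm => ih m hm (by omega)) (hB j hj)
  have h1 := f_bound (x := x) (by linarith : 0 ≤ σ) hτ0 hb (hcast j hj) (fun m hm => hE m (by omega))
    (fun m hm => hK m (by omega)) u
  have h2 := hE j hj u u
  rw [if_pos rfl] at h2
  have hxu : 0 ≤ x u := by rcases hx u with h | h <;> simp [h]
  rw [abs_of_nonneg hxu] at h1
  have h3 : x u * |(E ^ (j + 1)) u u| ≤ x u * (τ * b * β ^ j) := by gcongr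
  linarith

end SBM

namespace SBM
section norms
open scoped Matrix.Norms.L2Operator

lemma enorm_eq {n : ℕ} (x : Fin n → ℝ) : SBM.enorm x = ‖(WithLp.toLp 2 x : EuclideanSpace ℝ (Fin n))‖ := by
  rw [EuclideanSpace.norm_eq]
  simp [SBM.enorm]

lemma enorm_nonneg' {n : ℕ} (x : Fin n → ℝ) : 0 ≤ SBM.enorm x := Real.sqrt_nonneg _

lemma enorm_mulVec_le {n : ℕ} (A : Matrix (Fin n) (Fin n) ℝ) (x : Fin n → ℝ) :
    SBM.enorm (A *ᵥ x) ≤ ‖A‖ * SBM.enorm x := by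
  rw [enorm_eq, enorm_eq]
  exact Matrix.l2_opNorm_mulVec A (WithLp.toLp 2 x)

lemma enorm_add_le' {n : ℕ} (x y : Fin n → ℝ) :
    SBM.enorm (x + y) ≤ SBM.enorm x + SBM.enorm y := by
  simp only [enorm_eq, WithLp.toLp_add]
  exact norm_add_le _ _

lemma enorm_sub_le' {n : ℕ} (x y : Fin n → ℝ) :
    SBM.enorm (x - y) ≤ SBM.enorm x + SBM.enorm y := by
  simp only [enorm_eq, WithLp.toLp_sub]
  exact norm_sub_le _ _

lemma enorm_smul' {n : ℕ} (a : ℝ) (x : Fin n → ℝ) :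
    SBM.enorm (a • x) = |a| * SBM.enorm x := by
  simp only [enorm_eq, WithLp.toLp_smul]
  rw [norm_smul, Real.norm_eq_abs]

lemma opnorm_le {n : ℕ} (A : Matrix (Fin n) (Fin n) ℝ) (t : ℝ) (ht : 0 ≤ t)
    (h : ∀ x, SBM.enorm (A *ᵥ x) ≤ t * SBM.enorm x) : ‖A‖ ≤ t := by
  rw [Matrix.l2_opNorm_def]
  refine ContinuousLinearMap.opNorm_le_bound _ ht fun x => ?_
  have := h (WithLp.ofLp x)
  rw [enorm_eq, enorm_eq] at this
  exact this

lemma norm_one_le {n : ℕ} : ‖(1 : Matrix (Fin n) (Fin n) ℝ)‖ ≤ 1 := by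
  refine opnorm_le _ _ zero_le_one fun x => ?_
  simp

lemma norm_pow_le'' {n : ℕ} (A : Matrix (Fin n) (Fin n) ℝ) (t : ℝ) (h : ‖A‖ ≤ t) (m : ℕ) :
    ‖A ^ m‖ ≤ t ^ m := by
  induction m with
  | zero => simpa using norm_one_le
  | succ m ih =>
    rw [pow_succ, pow_succ]
    have := (norm_nonneg A).trans h
    exact (norm_mul_le _ _).trans (by gcongr)

lemma entry_norm {n : ℕ} (A : Matrix (Fin n) (Fin n) ℝ) (t : ℝ) (ht : 0 ≤ t)
    (h : ∀ i j, |A i j| ≤ t) : ‖A‖ ≤ n * t := by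
  refine opnorm_le _ _ (by positivity) fun x => ?_
  unfold SBM.enorm
  rw [← Real.sqrt_sq (show 0 ≤ (n * t : ℝ) by positivity), ← Real.sqrt_mul (by positivity)]
  apply Real.sqrt_le_sqrt
  have h1 : ∀ i, (A *ᵥ x) i ^ 2 ≤ (n * t ^ 2) * ∑ j, x j ^ 2 := by
    intro i
    have h2 := Finset.sum_mul_sq_le_sq_mul_sq Finset.univ (fun j => A i j) x
    refine h2.trans ?_
    gcongr
    calc _ ≤ ∑ j : Fin n, t ^ 2 := by
          refine Finset.sum_le_sum fun j _ => ?_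
          rw [← sq_abs]
          have := h i j
          gcongr
      _ = _ := by simp
  refine (Finset.sum_le_sum fun i _ => h1 i).trans ?_
  simp only [Finset.sum_const, Finset.card_univ, Fintype.card_fin, nsmul_eq_mul]
  apply le_of_eq; ring

lemma norm_of_ent {n : ℕ} (E : Matrix (Fin n) (Fin n) ℝ) (hE : E.IsSymm) (t : ℝ) (ht : 0 ≤ t)
    (i : ℕ) (hn : (n : ℝ) ≤ 3 ^ (2 ^ i))
    (h : ∀ u v, |(E ^ (2 ^ i)) u v| ≤ t ^ (2 ^ i)) : ‖E‖ ≤ 3 * t := by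
  have hsa : IsSelfAdjoint E := by
    have : Eᴴ = E := by
      ext a b; simp only [Matrix.conjTranspose_apply, star_trivial]
      exact hE.apply a b
    exact this
  have h1 := hsa.nnnorm_pow_two_pow i
  have h2 : ‖E ^ 2 ^ i‖ = ‖E‖ ^ 2 ^ i := by
    have := congrArg NNReal.toReal h1
    simpa using this
  have h3 := entry_norm (E ^ 2 ^ i) (t ^ 2 ^ i) (by positivity) h
  rw [h2] at h3
  have h4 : ‖E‖ ^ 2 ^ i ≤ (3 * t) ^ 2 ^ i := by
    rw [mul_pow]
    exact h3.trans (by gcongr)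
  exact le_of_pow_le_pow_left₀ (by positivity) (by positivity) h4

/-- inductive bound on `P E^m W^j w` -/
lemma PW_bound {n : ℕ} (E P : Matrix (Fin n) (Fin n) ℝ) (w : Fin n → ℝ) (a c M β : ℝ) (R : ℕ)
    (h : ∀ m ≤ R, SBM.enorm (P *ᵥ ((E ^ m) *ᵥ w)) ≤ M * β ^ m) (j : ℕ) :
    ∀ m, m + 2 * j ≤ R → SBM.enorm (P *ᵥ ((E ^ m) *ᵥ (((a • (E * E) + c • E) ^ j) *ᵥ w))) ≤
      M * β ^ m * (|a| * β ^ 2 + |c| * β) ^ j := by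
  induction j with
  | zero => intro m hm; simpa using h m (by omega)
  | succ j ih =>
    intro m hm
    have h1 := ih (m + 2) (by omega)
    have h2 := ih (m + 1) (by omega)
    set W := a • (E * E) + c • E with hW
    have e : P *ᵥ ((E ^ m) *ᵥ ((W ^ (j + 1)) *ᵥ w)) =
        a • (P *ᵥ ((E ^ (m + 2)) *ᵥ ((W ^ j) *ᵥ w))) +
        c • (P *ᵥ ((E ^ (m + 1)) *ᵥ ((W ^ j) *ᵥ w))) := by
      have e1 : E ^ m * W = a • E ^ (m + 2) + c • E ^ (m + 1) := by
        rw [hW, mul_add, Matrix.mul_smul, Matrix.mul_smul, ← mul_assoc, ← pow_succ, ← pow_succ]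
      rw [pow_succ' W j, ← Matrix.mulVec_mulVec, Matrix.mulVec_mulVec _ (E ^ m) W, e1,
        Matrix.add_mulVec, Matrix.mulVec_add, Matrix.smul_mulVec, Matrix.smul_mulVec,
        Matrix.mulVec_smul, Matrix.mulVec_smul]
    rw [e]
    refine (enorm_add_le' _ _).trans ?_
    rw [enorm_smul', enorm_smul']
    calc _ ≤ |a| * (M * β ^ (m + 2) * (|a| * β ^ 2 + |c| * β) ^ j) +
          |c| * (M * β ^ (m + 1) * (|a| * β ^ 2 + |c| * β) ^ j) := by gcongr
      _ = _ := by ring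

lemma telescope {n : ℕ} (X W : Matrix (Fin n) (Fin n) ℝ) (w : Fin n → ℝ) (ξ N : ℝ) (hξ : 1 ≤ ξ)
    (hX : ‖X‖ ≤ ξ) (hN : 0 ≤ N) (r : ℕ)
    (h : ∀ j < r, SBM.enorm ((X - W) *ᵥ ((W ^ j) *ᵥ w)) ≤ N * (1 / 2) ^ j) :
    SBM.enorm ((X ^ r) *ᵥ w - (W ^ r) *ᵥ w) ≤ 2 * N * ξ ^ r * (1 - (1 / 2) ^ r) := by
  induction r with
  | zero => simp [SBM.enorm]
  | succ r ih =>
    have h1 := ih fun j hj => h j (by omega)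
    have h2 := h r (by omega)
    have e : (X ^ (r + 1)) *ᵥ w - (W ^ (r + 1)) *ᵥ w =
        X *ᵥ ((X ^ r) *ᵥ w - (W ^ r) *ᵥ w) + (X - W) *ᵥ ((W ^ r) *ᵥ w) := by
      rw [Matrix.mulVec_sub, Matrix.sub_mulVec, Matrix.mulVec_mulVec, Matrix.mulVec_mulVec,
        Matrix.mulVec_mulVec, pow_succ', pow_succ']
      abel
    rw [e]
    refine (enorm_add_le' _ _).trans ?_
    have h3 := enorm_mulVec_le X ((X ^ r) *ᵥ w - (W ^ r) *ᵥ w)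
    have h4 : ‖X‖ * SBM.enorm ((X ^ r) *ᵥ w - (W ^ r) *ᵥ w) ≤
        ξ * (2 * N * ξ ^ r * (1 - (1 / 2) ^ r)) := by
      have := enorm_nonneg' ((X ^ r) *ᵥ w - (W ^ r) *ᵥ w)
      gcongr
    have h5 : N * (1 / 2) ^ r ≤ N * (1 / 2) ^ r * ξ ^ (r + 1) :=
      le_mul_of_one_le_right (by positivity) (one_le_pow₀ hξ)
    calc _ ≤ ξ * (2 * N * ξ ^ r * (1 - (1 / 2) ^ r)) + N * (1 / 2) ^ r * ξ ^ (r + 1) := by linarith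
      _ = _ := by ring

lemma det_main {n : ℕ} (G E P : Matrix (Fin n) (Fin n) ℝ) (w : Fin n → ℝ) (lam mu M β δ ε : ℝ) (r : ℕ)
    (hr : 1 ≤ r) (hmu : 0 < mu) (hlam : mu ≤ lam) (hG : ‖G‖ ≤ lam) (hGP : G * P = G)
    (hδ : 0 ≤ δ) (hδ1 : δ ≤ 1) (hY : ‖psiM lam mu G‖ ≤ 1 + δ) (hε : 0 ≤ ε) (hε1 : ε ≤ 1 / 10)
    (hE : ‖E‖ ≤ ε * mu) (hβ0 : 0 ≤ β) (hβ : β ≤ ε * mu) (hM : 0 ≤ M)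
    (hP : ∀ m ≤ 2 * r, SBM.enorm (P *ᵥ ((E ^ m) *ᵥ w)) ≤ M * β ^ m) :
    SBM.enorm ((phiM lam mu r (G + E) - phiM lam mu r G) *ᵥ w) ≤
      7 * M * (1 + δ + 5 * ε) ^ r + (3 * ε) ^ r * SBM.enorm w := by
  have hlam0 : 0 < lam := hmu.trans_le hlam
  set a : ℝ := -(1 / (lam * mu)) with ha
  set c : ℝ := 1 / lam + 1 / mu with hc
  have haabs : |a| = 1 / (lam * mu) := by
    rw [ha, abs_neg, abs_of_pos (by positivity)]
  have hcabs : |c| = c := abs_of_pos (by positivity)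
  have hcle : c ≤ 2 / mu := by
    have : 1 / lam ≤ 1 / mu := one_div_le_one_div_of_le hmu hlam
    rw [hc]
    calc _ ≤ 1 / mu + 1 / mu := by gcongr
      _ = _ := by ring
  have hale : |a| ≤ 1 / mu ^ 2 := by
    rw [haabs]
    apply one_div_le_one_div_of_le (by positivity)
    nlinarith
  have hal : |a| * lam = 1 / mu := by rw [haabs]; field_simp
  have hquad : ∀ t, 0 ≤ t → t ≤ ε * mu → |a| * t ^ 2 + |c| * t ≤ 3 * ε := by
    intro t ht0 ht
    rw [hcabs]
    calc _ ≤ 1 / mu ^ 2 * (ε * mu) ^ 2 + 2 / mu * (ε * mu) := by gcongr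
      _ = ε ^ 2 + 2 * ε := by field_simp
      _ ≤ _ := by nlinarith
  set X := psiM lam mu (G + E) with hX
  set Y := psiM lam mu G with hYd
  set W := a • (E * E) + c • E with hW
  have hXW : X - W = Y + a • (G * E) + a • (E * G) := by
    rw [hX, hYd, hW, psiM, psiM, ← ha, ← hc]
    simp only [mul_add, add_mul, smul_add]
    abel
  have hWn : ‖W‖ ≤ 3 * ε := by
    refine le_trans ?_ (hquad ‖E‖ (norm_nonneg _) hE)
    rw [hW]
    refine (norm_add_le _ _).trans ?_
    rw [norm_smul, norm_smul, Real.norm_eq_abs, Real.norm_eq_abs]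
    have : ‖E * E‖ ≤ ‖E‖ ^ 2 := by rw [sq]; exact norm_mul_le _ _
    gcongr
  have hcross : |a| * (‖G‖ * ‖E‖) ≤ ε := by
    calc |a| * (‖G‖ * ‖E‖) ≤ |a| * (lam * (ε * mu)) := by gcongr
      _ = (|a| * lam) * (ε * mu) := by ring
      _ = ε := by rw [hal]; field_simp
  have hXn : ‖X‖ ≤ 1 + δ + 5 * ε := by
    have e : X = Y + a • (G * E) + a • (E * G) + W := by rw [← hXW]; abel
    rw [e]
    have h1 : ‖a • (G * E)‖ ≤ ε := by
      rw [norm_smul, Real.norm_eq_abs]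
      refine le_trans ?_ hcross
      gcongr
      exact norm_mul_le _ _
    have h2 : ‖a • (E * G)‖ ≤ ε := by
      rw [norm_smul, Real.norm_eq_abs]
      refine le_trans ?_ hcross
      gcongr
      rw [mul_comm ‖G‖]
      exact norm_mul_le _ _
    have := norm_add₃_le (a := Y) (b := a • (G * E)) (c := a • (E * G))
    have := norm_add_le (Y + a • (G * E) + a • (E * G)) W
    linarith
  have hYP : Y * P = Y := by
    rw [hYd, psiM, add_mul, Matrix.smul_mul, Matrix.smul_mul, mul_assoc, hGP]
  have hPW := PW_bound E P w a c M β (2 * r) hP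
  have hρ := hquad β hβ0 hβ
  have hρ0 : 0 ≤ |a| * β ^ 2 + |c| * β := by positivity
  have hρ1 : |a| * β ^ 2 + |c| * β ≤ 1 / 2 := by linarith
  have hstep : ∀ j < r, SBM.enorm ((X - W) *ᵥ ((W ^ j) *ᵥ w)) ≤ (3 * M) * (1 / 2) ^ j := by
    intro j hj
    have h0 := hPW j 0 (by omega)
    have h1 := hPW j 1 (by omega)
    rw [← hW] at h0 h1
    rw [pow_zero, Matrix.one_mulVec, pow_zero, mul_one] at h0
    rw [pow_one, pow_one] at h1
    set z := (W ^ j) *ᵥ w with hz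
    have hpw : (|a| * β ^ 2 + |c| * β) ^ j ≤ (1 / 2) ^ j := by gcongr
    have h0' : SBM.enorm (P *ᵥ z) ≤ M * (1 / 2) ^ j := h0.trans (by gcongr)
    have h1' : SBM.enorm (P *ᵥ (E *ᵥ z)) ≤ M * β * (1 / 2) ^ j := h1.trans (by gcongr)
    rw [hXW, Matrix.add_mulVec, Matrix.add_mulVec, Matrix.smul_mulVec, Matrix.smul_mulVec]
    have b1 : SBM.enorm (Y *ᵥ z) ≤ (1 + δ) * (M * (1 / 2) ^ j) := by
      rw [← hYP, ← Matrix.mulVec_mulVec]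
      refine (enorm_mulVec_le _ _).trans ?_
      have := enorm_nonneg' (P *ᵥ z)
      gcongr
    have b2 : SBM.enorm (a • ((G * E) *ᵥ z)) ≤ ε * (M * (1 / 2) ^ j) := by
      rw [enorm_smul', ← Matrix.mulVec_mulVec]
      have : SBM.enorm (G *ᵥ (E *ᵥ z)) ≤ lam * (M * β * (1 / 2) ^ j) := by
        conv_lhs => rw [← hGP, ← Matrix.mulVec_mulVec]
        refine (enorm_mulVec_le _ _).trans ?_
        have := enorm_nonneg' (P *ᵥ (E *ᵥ z))
        gcongr
      calc _ ≤ |a| * (lam * (M * β * (1 / 2) ^ j)) := by gcongr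
        _ = (|a| * lam) * β * (M * (1 / 2) ^ j) := by ring
        _ ≤ (|a| * lam) * (ε * mu) * (M * (1 / 2) ^ j) := by gcongr
        _ = _ := by rw [hal]; field_simp
    have b3 : SBM.enorm (a • ((E * G) *ᵥ z)) ≤ ε * (M * (1 / 2) ^ j) := by
      rw [enorm_smul', ← Matrix.mulVec_mulVec]
      have : SBM.enorm (E *ᵥ (G *ᵥ z)) ≤ ‖E‖ * (‖G‖ * (M * (1 / 2) ^ j)) := by
        refine (enorm_mulVec_le _ _).trans ?_
        gcongr
        conv_lhs => rw [← hGP, ← Matrix.mulVec_mulVec]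
        refine (enorm_mulVec_le _ _).trans ?_
        gcongr
      calc _ ≤ |a| * (‖E‖ * (‖G‖ * (M * (1 / 2) ^ j))) := by gcongr
        _ = |a| * (‖G‖ * ‖E‖) * (M * (1 / 2) ^ j) := by ring
        _ ≤ _ := by gcongr
    have t1 := enorm_add_le' (Y *ᵥ z + a • ((G * E) *ᵥ z)) (a • ((E * G) *ᵥ z))
    have t2 := enorm_add_le' (Y *ᵥ z) (a • ((G * E) *ᵥ z))
    have h7 : (1 + δ + 2 * ε) * (M * (1 / 2) ^ j) ≤ 3 * (M * (1 / 2) ^ j) := by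
      gcongr; linarith
    linarith
  have hξ : 1 ≤ 1 + δ + 5 * ε := by linarith
  have htel := telescope X W w (1 + δ + 5 * ε) (3 * M) hξ hXn (by positivity) r hstep
  have hξr : 0 ≤ (1 + δ + 5 * ε) ^ r := by positivity
  have htel' : SBM.enorm ((X ^ r) *ᵥ w - (W ^ r) *ᵥ w) ≤ 6 * M * (1 + δ + 5 * ε) ^ r := by
    refine htel.trans ?_
    have : (1 - (1 / 2 : ℝ) ^ r) ≤ 1 := by
      have : (0:ℝ) ≤ (1 / 2) ^ r := by positivity
      linarith
    calc _ ≤ 2 * (3 * M) * (1 + δ + 5 * ε) ^ r * 1 := by gcongr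
      _ = _ := by ring
  have hWr : SBM.enorm ((W ^ r) *ᵥ w) ≤ (3 * ε) ^ r * SBM.enorm w := by
    refine (enorm_mulVec_le _ _).trans ?_
    have := enorm_nonneg' w
    gcongr
    exact norm_pow_le'' W _ hWn r
  have hYr : SBM.enorm ((Y ^ r) *ᵥ w) ≤ M * (1 + δ + 5 * ε) ^ r := by
    have e : Y ^ r = Y ^ r * P := by
      obtain ⟨s, rfl⟩ : ∃ s, r = s + 1 := ⟨r - 1, by omega⟩
      rw [pow_succ, mul_assoc, hYP]
    rw [e, ← Matrix.mulVec_mulVec]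
    refine (enorm_mulVec_le _ _).trans ?_
    have h0 := hP 0 (by omega)
    simp only [pow_zero, Matrix.one_mulVec, mul_one] at h0
    rw [mul_comm M]
    have := enorm_nonneg' (P *ᵥ w)
    have := norm_pow_le'' Y (1 + δ + 5 * ε) (by linarith) r
    gcongr
  have efin : (phiM lam mu r (G + E) - phiM lam mu r G) *ᵥ w =
      ((X ^ r) *ᵥ w - (W ^ r) *ᵥ w) + (W ^ r) *ᵥ w - (Y ^ r) *ᵥ w := by
    rw [phiM, phiM, Matrix.sub_mulVec]; abel
  rw [efin]
  have t1 := enorm_sub_le' (((X ^ r) *ᵥ w - (W ^ r) *ᵥ w) + (W ^ r) *ᵥ w) ((Y ^ r) *ᵥ w)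
  have t2 := enorm_add_le' ((X ^ r) *ᵥ w - (W ^ r) *ᵥ w) ((W ^ r) *ᵥ w)
  linarith

end norms
end SBM

namespace SBM
section spec
open scoped Matrix.Norms.L2Operator

lemma decomp_orth {n : ℕ} {A : Matrix (Fin n) (Fin n) ℝ} {lam : Fin n → ℝ} {v : Fin n → Fin n → ℝ}
    (h : IsSpectralDecomp A lam v) :
    (Matrix.of v) * (Matrix.of v)ᵀ = 1 ∧ (Matrix.of v)ᵀ * (Matrix.of v) = 1 ∧
      A = (Matrix.of v)ᵀ * diagonal lam * (Matrix.of v) := by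
  obtain ⟨_, h2, h3⟩ := h
  have h1 : (Matrix.of v) * (Matrix.of v)ᵀ = 1 := by
    ext i j
    rw [Matrix.mul_apply, Matrix.one_apply, ← h2 i j]
    rfl
  refine ⟨h1, mul_eq_one_comm.mp h1, ?_⟩
  rw [h3]
  ext a b
  rw [Matrix.sum_apply, Matrix.mul_apply]
  refine Finset.sum_congr rfl fun i _ => ?_
  rw [Matrix.mul_diagonal]
  simp [Matrix.vecMulVec_apply]
  ring

lemma norm_orth {n : ℕ} {V : Matrix (Fin n) (Fin n) ℝ} (h : Vᵀ * V = 1) : ‖V‖ ≤ 1 := by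
  have h1 := Matrix.l2_opNorm_conjTranspose_mul_self V
  have h2 : Vᴴ = Vᵀ := by ext; simp
  rw [h2, h] at h1
  have := norm_one_le (n := n)
  have := norm_nonneg V
  nlinarith

lemma norm_conj_diag {n : ℕ} {V : Matrix (Fin n) (Fin n) ℝ} (h : Vᵀ * V = 1) (h' : V * Vᵀ = 1)
    (d : Fin n → ℝ) (t : ℝ) (ht : 0 ≤ t) (hd : ∀ i, |d i| ≤ t) :
    ‖Vᵀ * diagonal d * V‖ ≤ t := by
  have h1 := norm_orth h
  have h2 : ‖Vᵀ‖ ≤ 1 := norm_orth (by rwa [Matrix.transpose_transpose])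
  have h3 : ‖diagonal d‖ ≤ t := by
    rw [Matrix.l2_opNorm_diagonal]
    exact (pi_norm_le_iff_of_nonneg ht).mpr hd
  calc _ ≤ ‖Vᵀ * diagonal d‖ * ‖V‖ := norm_mul_le _ _
    _ ≤ (‖Vᵀ‖ * ‖diagonal d‖) * ‖V‖ := by gcongr; exact norm_mul_le _ _
    _ ≤ (1 * t) * 1 := by gcongr
    _ = t := by ring

lemma decomp_psi {n : ℕ} {A : Matrix (Fin n) (Fin n) ℝ} {lam : Fin n → ℝ} {v : Fin n → Fin n → ℝ}
    (h : IsSpectralDecomp A lam v) (l m : ℝ) :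
    psiM l m A = (Matrix.of v)ᵀ * diagonal (fun i => psiR l m (lam i)) * (Matrix.of v) := by
  obtain ⟨h1, h2, h3⟩ := decomp_orth h
  set V := Matrix.of v
  have e : A * A = Vᵀ * diagonal (fun i => lam i ^ 2) * V := by
    have : (fun i => lam i ^ 2) = fun i => lam i * lam i := by ext; ring
    rw [this, ← Matrix.diagonal_mul_diagonal]
    calc A * A = Vᵀ * diagonal lam * (V * Vᵀ) * diagonal lam * V := by
          rw [h3]; simp only [mul_assoc]
      _ = _ := by rw [h1]; simp only [mul_assoc, mul_one, one_mul]
  rw [psiM, e]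
  conv_lhs => rw [h3]
  have e2 : diagonal (fun i => psiR l m (lam i)) = (-(1 / (l * m))) • diagonal (fun i => lam i ^ 2) +
      (1 / l + 1 / m) • diagonal lam := by
    ext i j
    by_cases hij : i = j
    · subst hij; simp [psiR]
    · simp [hij]
  rw [e2]
  simp only [mul_add, add_mul, Matrix.mul_smul, Matrix.smul_mul]

/-- quadratic form of the mean matrix -/
lemma quad_mean {n k : ℕ} (p q : ℝ) (cl : Fin n → Fin k) (x : Fin n → ℝ) :
    x ⬝ᵥ (meanMatrix n k p q cl *ᵥ x) =
      (p - q) * ∑ c, (∑ v, if cl v = c then x v else 0) ^ 2 + q * (∑ v, x v) ^ 2 := by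
  have h1 : ∑ c, (∑ v, if cl v = c then x v else 0) ^ 2 =
      ∑ u, ∑ v, (if cl u = cl v then x u * x v else 0) := by
    simp only [sq, Finset.sum_mul_sum]
    rw [Finset.sum_comm]
    refine Finset.sum_congr rfl fun u _ => ?_
    rw [Finset.sum_comm]
    refine Finset.sum_congr rfl fun v _ => ?_
    simp only [ite_mul, zero_mul, mul_ite, mul_zero]
    rw [Finset.sum_ite_eq]
    simp only [Finset.mem_univ, if_true]
  rw [h1, sq, Finset.sum_mul_sum]
  simp only [dotProduct, Matrix.mulVec, Finset.mul_sum, ← Finset.sum_add_distrib, meanMatrix,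
    Matrix.of_apply]
  refine Finset.sum_congr rfl fun u _ => Finset.sum_congr rfl fun v _ => ?_
  split_ifs <;> ring

lemma eig_eq {n : ℕ} {A : Matrix (Fin n) (Fin n) ℝ} {lam : Fin n → ℝ} {v : Fin n → Fin n → ℝ}
    (h : IsSpectralDecomp A lam v) (i : Fin n) : A *ᵥ v i = lam i • v i := by
  obtain ⟨_, h2, h3⟩ := h
  rw [h3, Matrix.sum_mulVec]
  rw [Finset.sum_eq_single i]
  · rw [Matrix.smul_mulVec, Matrix.vecMulVec_mulVec, h2 i i]; simp
  · intro j _ hj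
    rw [Matrix.smul_mulVec, Matrix.vecMulVec_mulVec, h2 j i, if_neg hj]; simp
  · simp

lemma eig_nonneg {n k : ℕ} {p q : ℝ} (hq : 0 ≤ q) (hpq : q < p) {cl : Fin n → Fin k}
    {lam : Fin n → ℝ} {v : Fin n → Fin n → ℝ}
    (h : IsSpectralDecomp (meanMatrix n k p q cl) lam v) (i : Fin n) : 0 ≤ lam i := by
  have h1 := quad_mean p q cl (v i)
  rw [eig_eq h i, dotProduct_smul, h.2.1 i i, if_pos rfl] at h1
  simp only [smul_eq_mul, mul_one] at h1
  rw [h1]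
  have : 0 ≤ p - q := by linarith
  positivity

lemma cluster_cs {n k : ℕ} (cl : Fin n → Fin k) (s : ℝ) (hs : ∀ c, (clusterSize cl c : ℝ) ≤ s)
    (x : Fin n → ℝ) : ∑ c, (∑ v, if cl v = c then x v else 0) ^ 2 ≤ s * ∑ v, x v ^ 2 := by
  have h1 : ∀ c, (∑ v, if cl v = c then x v else 0) ^ 2 ≤
      s * ∑ v, if cl v = c then x v ^ 2 else 0 := by
    intro c
    rw [← Finset.sum_filter, ← Finset.sum_filter]
    refine (sq_sum_le_card_mul_sum_sq).trans ?_
    gcongr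
    · exact hs c
  refine (Finset.sum_le_sum fun c _ => h1 c).trans ?_
  rw [← Finset.mul_sum, Finset.sum_comm]
  simp

lemma eig_le {n k : ℕ} (hn : 0 < n) {p q : ℝ} (hq : 0 ≤ q) (hpq : q < p) {cl : Fin n → Fin k}
    {lam : Fin n → ℝ} {v : Fin n → Fin n → ℝ}
    (h : IsSpectralDecomp (meanMatrix n k p q cl) lam v) (s : ℝ)
    (hs : ∀ c, (clusterSize cl c : ℝ) ≤ s) (i : Fin n) (hi : i ≠ ⟨0, hn⟩) :
    lam i ≤ (p - q) * s := by
  set o : Fin n := ⟨0, hn⟩ with ho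
  have hle : lam i ≤ lam o := h.1 (Fin.mk_le_of_le_val (Nat.zero_le _))
  obtain ⟨a, b, hab, hs0⟩ : ∃ a b : ℝ, 0 < a ^ 2 + b ^ 2 ∧ a * (∑ w, v o w) + b * ∑ w, v i w = 0 := by
    by_cases hz : ∑ w, v i w = 0
    · exact ⟨0, 1, by norm_num, by rw [hz]; ring⟩
    · refine ⟨∑ w, v i w, -∑ w, v o w, ?_, by ring⟩
      positivity
  set x := a • v o + b • v i with hx
  have hsum : ∑ w, x w = 0 := by
    simp only [hx, Pi.add_apply, Pi.smul_apply, smul_eq_mul, Finset.sum_add_distrib,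
      ← Finset.mul_sum]
    exact hs0
  have hoi := h.2.1 o i
  have hio := h.2.1 i o
  have hoo := h.2.1 o o
  have hii := h.2.1 i i
  rw [if_pos rfl] at hoo hii
  rw [if_neg hi] at hio
  rw [if_neg (Ne.symm hi)] at hoi
  have hxx : x ⬝ᵥ x = a ^ 2 + b ^ 2 := by
    simp only [hx, dotProduct_add, add_dotProduct, dotProduct_smul, smul_dotProduct, hoi, hio, hoo,
      hii, smul_eq_mul]
    ring
  have hq1 := quad_mean p q cl x
  rw [hsum] at hq1
  have hAx : meanMatrix n k p q cl *ᵥ x = (a * lam o) • v o + (b * lam i) • v i := by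
    rw [hx, Matrix.mulVec_add, Matrix.mulVec_smul, Matrix.mulVec_smul, eig_eq h, eig_eq h,
      smul_smul, smul_smul]
  have hq2 : x ⬝ᵥ (meanMatrix n k p q cl *ᵥ x) = a ^ 2 * lam o + b ^ 2 * lam i := by
    rw [hAx]
    simp only [hx, dotProduct_add, add_dotProduct, dotProduct_smul, smul_dotProduct, hoi, hio, hoo,
      hii, smul_eq_mul]
    ring
  have hcs := cluster_cs cl s hs x
  have hxx' : ∑ w, x w ^ 2 = a ^ 2 + b ^ 2 := by
    rw [← hxx]; simp [dotProduct, sq]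
  rw [hxx'] at hcs
  have h5 : (p - q) * ∑ c, (∑ v, if cl v = c then x v else 0) ^ 2 ≤ (p - q) * (s * (a ^ 2 + b ^ 2)) := by
    have : 0 ≤ p - q := by linarith
    gcongr
  have h6 : (a ^ 2 + b ^ 2) * lam i ≤ (a ^ 2 + b ^ 2) * ((p - q) * s) := by
    nlinarith [mul_le_mul_of_nonneg_left hle (sq_nonneg a)]
  exact le_of_mul_le_mul_left h6 hab

lemma norm_mean_le {n k : ℕ} (hn : 0 < n) {p q : ℝ} (hq : 0 ≤ q) (hpq : q < p) {cl : Fin n → Fin k}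
    {lam : Fin n → ℝ} {v : Fin n → Fin n → ℝ}
    (h : IsSpectralDecomp (meanMatrix n k p q cl) lam v) :
    ‖meanMatrix n k p q cl‖ ≤ lam ⟨0, hn⟩ := by
  obtain ⟨h1, h2, h3⟩ := decomp_orth h
  rw [h3]
  refine norm_conj_diag h2 h1 _ _ (eig_nonneg hq hpq h _) fun i => ?_
  rw [abs_of_nonneg (eig_nonneg hq hpq h i)]
  exact h.1 (Fin.mk_le_of_le_val (Nat.zero_le _))

lemma mu_le_lam {n k : ℕ} (hn : 0 < n) (hk : 0 < k) {p q : ℝ} (hq : 0 ≤ q) (hpq : q < p)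
    {cl : Fin n → Fin k}
    {lam : Fin n → ℝ} {v : Fin n → Fin n → ℝ}
    (h : IsSpectralDecomp (meanMatrix n k p q cl) lam v) :
    (p - q) * ((n : ℝ) / k) ≤ lam ⟨0, hn⟩ := by
  have h1 := norm_mean_le hn hq hpq h
  set A := meanMatrix n k p q cl
  set x : Fin n → ℝ := fun _ => 1 with hx
  have h2 := quad_mean p q cl x
  have h3 : x ⬝ᵥ (A *ᵥ x) ≤ ‖A‖ * n := by
    have hc : x ⬝ᵥ (A *ᵥ x) ≤ SBM.enorm x * SBM.enorm (A *ᵥ x) := by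
      unfold SBM.enorm dotProduct
      exact Real.sum_mul_le_sqrt_mul_sqrt _ _ _
    have h4 := enorm_mulVec_le A x
    have h5 : SBM.enorm x * SBM.enorm x = n := by
      unfold SBM.enorm
      rw [Real.mul_self_sqrt (by positivity)]
      simp [hx]
    have := enorm_nonneg' x
    calc _ ≤ SBM.enorm x * SBM.enorm (A *ᵥ x) := hc
      _ ≤ SBM.enorm x * (‖A‖ * SBM.enorm x) := by gcongr
      _ = ‖A‖ * (SBM.enorm x * SBM.enorm x) := by ring
      _ = _ := by rw [h5]
  have h6 : ((n : ℝ)) ^ 2 ≤ k * ∑ c : Fin k, (∑ v, if cl v = c then x v else 0) ^ 2 := by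
    have := sq_sum_le_card_mul_sum_sq (s := (Finset.univ : Finset (Fin k)))
      (f := fun c => ∑ v, if cl v = c then x v else 0)
    rw [Finset.sum_comm] at this
    simpa [hx] using this
  have hn' : (0 : ℝ) < n := by exact_mod_cast hn
  have hk' : (0 : ℝ) < k := by exact_mod_cast hk
  have h7 : (n : ℝ) ^ 2 / k ≤ ∑ c : Fin k, (∑ v, if cl v = c then x v else 0) ^ 2 := by
    rw [div_le_iff₀ hk']; linarith
  have h8 : (p - q) * ((n : ℝ) ^ 2 / k) ≤ x ⬝ᵥ (A *ᵥ x) := by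
    rw [h2]
    have : 0 ≤ p - q := by linarith
    have h9 : 0 ≤ q * (∑ v, x v) ^ 2 := by positivity
    have := mul_le_mul_of_nonneg_left h7 this
    linarith
  have h10 : (p - q) * ((n : ℝ) / k) * n ≤ lam ⟨0, hn⟩ * n := by
    calc _ = (p - q) * ((n : ℝ) ^ 2 / k) := by ring
      _ ≤ ‖A‖ * n := h8.trans h3
      _ ≤ _ := by gcongr
  exact le_of_mul_le_mul_right h10 hn'

lemma norm_psi_le {n k : ℕ} (hn : 0 < n) (hk : 0 < k) {p q : ℝ} (hq : 0 ≤ q) (hpq : q < p)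
    {cl : Fin n → Fin k}
    {lam : Fin n → ℝ} {v : Fin n → Fin n → ℝ}
    (h : IsSpectralDecomp (meanMatrix n k p q cl) lam v) (δ : ℝ) (hδ : 0 ≤ δ)
    (hs : ∀ c, (clusterSize cl c : ℝ) ≤ (1 + δ) * ((n : ℝ) / k)) :
    ‖psiM (lam ⟨0, hn⟩) ((p - q) * ((n : ℝ) / k)) (meanMatrix n k p q cl)‖ ≤ 1 + δ := by
  obtain ⟨h1, h2, _⟩ := decomp_orth h
  rw [decomp_psi h]
  have hn' : (0 : ℝ) < n := by exact_mod_cast hn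
  have hk' : (0 : ℝ) < k := by exact_mod_cast hk
  have hmul := mu_le_lam hn hk hq hpq h
  set l := lam ⟨0, hn⟩ with hl
  set m := (p - q) * ((n : ℝ) / k) with hm
  have hm0 : 0 < m := by
    have : 0 < p - q := by linarith
    positivity
  have hl0 : 0 < l := hm0.trans_le hmul
  refine norm_conj_diag h2 h1 _ _ (by linarith) fun i => ?_
  have hi0 := eig_nonneg hq hpq h i
  have hil : lam i ≤ l := h.1 (Fin.mk_le_of_le_val (Nat.zero_le _))
  set t := lam i with ht
  have e : psiR l m t = t * (l + m - t) / (l * m) := by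
    unfold psiR; field_simp; ring
  rw [e, abs_of_nonneg (div_nonneg (mul_nonneg hi0 (by linarith)) (by positivity)),
    div_le_iff₀ (by positivity)]
  by_cases hio : i = ⟨0, hn⟩
  · have : t = l := by rw [ht, hl, hio]
    rw [this]
    nlinarith [mul_pos hl0 hm0]
  · have h5 := eig_le hn hq hpq h _ hs i hio
    have h6 : t ≤ (1 + δ) * m := by rw [hm]; linarith
    -- 1 - ψ = (l - t)(m - t)/(l m)
    have h7 : (l - t) * (t - m) ≤ δ * (l * m) := by
      by_cases h8 : t ≤ m
      · have : (l - t) * (t - m) ≤ 0 := mul_nonpos_of_nonneg_of_nonpos (by linarith) (by linarith)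
        have : 0 ≤ δ * (l * m) := by positivity
        linarith
      · push Not at h8
        calc (l - t) * (t - m) ≤ l * (δ * m) := by
              apply mul_le_mul <;> first | linarith | positivity
          _ = _ := by ring
    linarith

/-- cluster projection -/
noncomputable def Pm {n k : ℕ} (cl : Fin n → Fin k) : Matrix (Fin n) (Fin n) ℝ :=
  Matrix.of fun u v => if cl u = cl v then 1 / (clusterSize cl (cl u) : ℝ) else 0

lemma clusterSize_pos {n k : ℕ} (cl : Fin n → Fin k) (u : Fin n) : 0 < clusterSize cl (cl u) :=
  Finset.card_pos.mpr ⟨u, by simp⟩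

lemma mean_mul_Pm {n k : ℕ} (p q : ℝ) (cl : Fin n → Fin k) :
    meanMatrix n k p q cl * Pm cl = meanMatrix n k p q cl := by
  ext u v
  rw [Matrix.mul_apply]
  have h0 : (clusterSize cl (cl v) : ℝ) ≠ 0 := by
    have := clusterSize_pos cl v
    positivity
  have : ∀ y, meanMatrix n k p q cl u y * Pm cl y v =
      if cl y = cl v then meanMatrix n k p q cl u v * (1 / (clusterSize cl (cl v) : ℝ)) else 0 := by
    intro y
    simp only [meanMatrix, Pm, Matrix.of_apply]
    by_cases h : cl y = cl v
    · rw [if_pos h, if_pos h, h]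
    · rw [if_neg h, if_neg h, mul_zero]
  simp only [this]
  rw [← Finset.sum_filter, Finset.sum_const, nsmul_eq_mul]
  change (clusterSize cl (cl v) : ℝ) * _ = _
  field_simp

/-- cluster indicator -/
def ind {n k : ℕ} (cl : Fin n → Fin k) (c : Fin k) : Fin n → ℝ := fun v => if cl v = c then 1 else 0

lemma Pm_apply {n k : ℕ} (cl : Fin n → Fin k) (x : Fin n → ℝ) (u : Fin n) :
    (Pm cl *ᵥ x) u = 1 / (clusterSize cl (cl u) : ℝ) * (ind cl (cl u) ⬝ᵥ x) := by
  simp only [Matrix.mulVec, dotProduct, Pm, Matrix.of_apply, ind, Finset.mul_sum]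
  refine Finset.sum_congr rfl fun v _ => ?_
  by_cases h : cl u = cl v
  · rw [if_pos h, if_pos h.symm]; ring
  · rw [if_neg h, if_neg (Ne.symm h)]; ring

lemma Pm_bound {n k : ℕ} (hn : 0 < n) (hk : 0 < k) (cl : Fin n → Fin k) (x : Fin n → ℝ) (w : Fin n)
    (T p : ℝ) (hp : 0 ≤ p) (hT : 0 ≤ T)
    (hs : ∀ c, (n : ℝ) / (2 * k) ≤ clusterSize cl c)
    (hx : ∀ c, |ind cl c ⬝ᵥ x| ≤ T * (Real.sqrt (clusterSize cl c * p) +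
      Real.sqrt (n * p) * ind cl c w)) :
    SBM.enorm (Pm cl *ᵥ x) ≤ 3 * T * Real.sqrt (k * p) := by
  have hn' : (0 : ℝ) < n := by exact_mod_cast hn
  have hk' : (0 : ℝ) < k := by exact_mod_cast hk
  unfold SBM.enorm
  rw [← Real.sqrt_sq (show 0 ≤ 3 * T by positivity), ← Real.sqrt_mul (by positivity)]
  apply Real.sqrt_le_sqrt
  have h1 : ∀ u, (Pm cl *ᵥ x) u ^ 2 ≤ T ^ 2 * (2 * (2 * k * p / n)) +
      (if cl u = cl w then T ^ 2 * 2 * (n * p) * (1 / (clusterSize cl (cl w) : ℝ)) ^ 2 else 0) := by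
    intro u
    rw [Pm_apply]
    have hs0 : (0 : ℝ) < clusterSize cl (cl u) := by
      have := clusterSize_pos cl u
      positivity
    have h2 := hx (cl u)
    have h3 : (ind cl (cl u) ⬝ᵥ x) ^ 2 ≤ T ^ 2 * (2 * (clusterSize cl (cl u) * p) +
        2 * (n * p) * ind cl (cl u) w) := by
      have h4 : (ind cl (cl u) ⬝ᵥ x) ^ 2 ≤ (T * (Real.sqrt (clusterSize cl (cl u) * p) +
          Real.sqrt (n * p) * ind cl (cl u) w)) ^ 2 := by
        rw [← sq_abs]; gcongr
      refine h4.trans ?_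
      rw [mul_pow]
      gcongr
      have e1 : Real.sqrt (clusterSize cl (cl u) * p) ^ 2 = clusterSize cl (cl u) * p :=
        Real.sq_sqrt (by positivity)
      have e2 : Real.sqrt (n * p) ^ 2 = n * p := Real.sq_sqrt (by positivity)
      have e3 : ind cl (cl u) w ^ 2 = ind cl (cl u) w := by
        unfold ind; split_ifs <;> simp
      nlinarith [sq_nonneg (Real.sqrt (clusterSize cl (cl u) * p) -
          Real.sqrt (n * p) * ind cl (cl u) w), mul_pow (Real.sqrt (n * p)) (ind cl (cl u) w) 2]
    rw [mul_pow]
    have h5 : 1 / (clusterSize cl (cl u) : ℝ) ≤ 2 * k / n := by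
      rw [div_le_div_iff₀ hs0 hn']
      have := hs (cl u)
      rw [div_le_iff₀ (by positivity)] at this
      linarith
    calc _ ≤ (1 / (clusterSize cl (cl u) : ℝ)) ^ 2 * (T ^ 2 * (2 * (clusterSize cl (cl u) * p) +
        2 * (n * p) * ind cl (cl u) w)) := by gcongr
      _ = T ^ 2 * (2 * (1 / (clusterSize cl (cl u) : ℝ) * p)) +
          T ^ 2 * 2 * (n * p) * (1 / (clusterSize cl (cl u) : ℝ)) ^ 2 * ind cl (cl u) w := by
          field_simp
      _ ≤ T ^ 2 * (2 * (2 * k / n * p)) +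
          T ^ 2 * 2 * (n * p) * (1 / (clusterSize cl (cl u) : ℝ)) ^ 2 * ind cl (cl u) w := by
          gcongr
      _ ≤ _ := by
          apply add_le_add
          · apply le_of_eq; ring
          · unfold ind
            by_cases h : cl u = cl w
            · rw [if_pos h, if_pos h.symm, h, mul_one]
            · rw [if_neg h, if_neg (Ne.symm h), mul_zero]
  refine (Finset.sum_le_sum fun u _ => h1 u).trans ?_
  rw [Finset.sum_add_distrib, ← Finset.sum_filter, Finset.sum_const, Finset.sum_const, nsmul_eq_mul,
    nsmul_eq_mul, Finset.card_univ, Fintype.card_fin]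
  change (n : ℝ) * _ + (clusterSize cl (cl w) : ℝ) * _ ≤ _
  have hs0 : (0 : ℝ) < clusterSize cl (cl w) := by
    have := clusterSize_pos cl w
    positivity
  have h5 : 1 / (clusterSize cl (cl w) : ℝ) ≤ 2 * k / n := by
    rw [div_le_div_iff₀ hs0 hn']
    have := hs (cl w)
    rw [div_le_iff₀ (by positivity)] at this
    linarith
  calc _ = 4 * T ^ 2 * (k * p) + T ^ 2 * 2 * (n * p) * (1 / (clusterSize cl (cl w) : ℝ)) := by
        field_simp; ring
    _ ≤ 4 * T ^ 2 * (k * p) + T ^ 2 * 2 * (n * p) * (2 * k / n) := by gcongr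
    _ = 8 * (T ^ 2 * (k * p)) := by field_simp; ring
    _ ≤ 9 * (T ^ 2 * (k * p)) := by
        have : 0 ≤ T ^ 2 * (k * p) := by positivity
        linarith
    _ = _ := by ring

end spec
end SBM

namespace SBM

section prob

lemma mean_bounds {n k : ℕ} {p q : ℝ} (hq : 0 ≤ q) (hpq : q < p) (cl : Fin n → Fin k)
    (u v : Fin n) : 0 ≤ meanMatrix n k p q cl u v ∧ meanMatrix n k p q cl u v ≤ p := by
  simp only [meanMatrix, Matrix.of_apply]
  split_ifs <;> constructor <;> linarith

lemma mean_symm {n k : ℕ} (p q : ℝ) (cl : Fin n → Fin k) (u v : Fin n) :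
    meanMatrix n k p q cl u v = meanMatrix n k p q cl v u := by
  simp only [meanMatrix, Matrix.of_apply, eq_comm]

lemma scalar_mgf {g p t : ℝ} (hg : 0 ≤ g) (hg1 : g ≤ 1) (hgp : g ≤ p) (ht : |t| ≤ 1) :
    g * Real.exp (t * (1 - g)) + (1 - g) * Real.exp (t * (-g)) ≤ Real.exp (p * t ^ 2) := by
  have key : ∀ x : ℝ, |x| ≤ 1 → Real.exp x ≤ 1 + x + x ^ 2 := by
    intro x hx
    have := (abs_le.mp (Real.abs_exp_sub_one_sub_id_le hx)).2
    linarith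
  have h1 := key (t * (1 - g)) (by
    rw [abs_mul, abs_of_nonneg (by linarith : 0 ≤ 1 - g)]
    nlinarith [abs_nonneg t])
  have h2 := key (t * (-g)) (by
    rw [abs_mul, abs_neg, abs_of_nonneg hg]
    nlinarith [abs_nonneg t])
  have h3 : p * t ^ 2 + 1 ≤ Real.exp (p * t ^ 2) := Real.add_one_le_exp _
  have h4 := mul_le_mul_of_nonneg_left h1 hg
  have h5 := mul_le_mul_of_nonneg_left h2 (by linarith : 0 ≤ 1 - g)
  have h6 : g * (1 - g) * t ^ 2 ≤ p * t ^ 2 := by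
    apply mul_le_mul_of_nonneg_right _ (sq_nonneg t)
    nlinarith
  nlinarith

variable {Ω : Type*} [MeasureSpace Ω] [IsProbabilityMeasure (ℙ : Measure Ω)]

lemma noise_map {n k : ℕ} {p q : ℝ} {cl : Fin n → Fin k}
    {E : Ω → Matrix (Fin n) (Fin n) ℝ} (hE : NoiseModel p q cl E) (u v : Fin n) :
    Measure.map (fun ω => E ω u v) ℙ =
      ENNReal.ofReal (meanMatrix n k p q cl u v) •
        Measure.dirac (1 - meanMatrix n k p q cl u v) +
      ENNReal.ofReal (1 - meanMatrix n k p q cl u v) •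
        Measure.dirac (-(meanMatrix n k p q cl u v)) := by
  rcases le_total u v with h | h
  · exact hE.2.2.2 u v h
  · have : (fun ω => E ω u v) = fun ω => E ω v u := by
      ext ω
      exact ((hE.1 ω).apply v u)
    rw [this, hE.2.2.2 v u h, mean_symm p q cl u v]

lemma noise_mgf {n k : ℕ} {p q : ℝ} (hq : 0 ≤ q) (hpq : q < p) (hp : p ≤ 1)
    {cl : Fin n → Fin k}
    {E : Ω → Matrix (Fin n) (Fin n) ℝ} (hE : NoiseModel p q cl E) (u v : Fin n) {t : ℝ}
    (ht : |t| ≤ 1) :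
    ∫⁻ ω, ENNReal.ofReal (Real.exp (t * E ω u v)) ≤ ENNReal.ofReal (Real.exp (p * t ^ 2)) := by
  obtain ⟨hg, hgp⟩ := mean_bounds hq hpq cl u v
  have hmeas : Measurable fun x : ℝ => ENNReal.ofReal (Real.exp (t * x)) := by fun_prop
  have h1 : ∫⁻ ω, ENNReal.ofReal (Real.exp (t * E ω u v)) =
      ∫⁻ x, ENNReal.ofReal (Real.exp (t * x)) ∂(Measure.map (fun ω => E ω u v) ℙ) :=
    (lintegral_map hmeas (hE.2.1 u v)).symm
  rw [h1, noise_map hE, lintegral_add_measure, lintegral_smul_measure, lintegral_smul_measure,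
    lintegral_dirac' _ hmeas, lintegral_dirac' _ hmeas]
  simp only [smul_eq_mul]
  rw [← ENNReal.ofReal_mul hg, ← ENNReal.ofReal_mul (by linarith), ← ENNReal.ofReal_add
    (by positivity) (mul_nonneg (by linarith) (Real.exp_pos _).le)]
  exact ENNReal.ofReal_le_ofReal (scalar_mgf hg (by linarith) hgp ht)

lemma noise_ae {n k : ℕ} {p q : ℝ} {cl : Fin n → Fin k}
    {E : Ω → Matrix (Fin n) (Fin n) ℝ} (hE : NoiseModel p q cl E) :
    ∀ᵐ ω, ∀ u v : Fin n, E ω u v = 1 - meanMatrix n k p q cl u v ∨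
      E ω u v = -meanMatrix n k p q cl u v := by
  rw [ae_all_iff]; intro u
  rw [ae_all_iff]; intro v
  have hm : MeasurableSet {x : ℝ | x = 1 - meanMatrix n k p q cl u v ∨
      x = -meanMatrix n k p q cl u v} := by
    apply MeasurableSet.union <;> exact measurableSet_singleton _
  rw [← ae_map_iff (p := fun x => x = 1 - meanMatrix n k p q cl u v ∨
      x = -meanMatrix n k p q cl u v) (hE.2.1 u v).aemeasurable hm, noise_map hE,
    ae_add_measure_iff]
  constructor
  · apply Measure.ae_smul_measure
    rw [ae_dirac_iff hm]; left; rfl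
  · apply Measure.ae_smul_measure
    rw [ae_dirac_iff hm]; right; rfl

lemma row_indep {n k : ℕ} {p q : ℝ} {cl : Fin n → Fin k}
    {E : Ω → Matrix (Fin n) (Fin n) ℝ} (hE : NoiseModel p q cl E) (u : Fin n) :
    iIndepFun (fun v ω => E ω u v) ℙ := by
  have h := hE.2.2.1.precomp (g := fun v : Fin n =>
    (⟨(min u v, max u v), min_le_max⟩ : {e : Fin n × Fin n // e.1 ≤ e.2})) (by
      intro v w h
      simp only [Subtype.mk.injEq, Prod.mk.injEq] at h
      rcases le_total u v with h1 | h1 <;> rcases le_total u w with h2 | h2 <;>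
        simp [h1, h2] at h <;> grind)
  convert h using 1
  ext v ω
  rcases le_total u v with h1 | h1
  · simp [h1]
  · simp only [h1, min_eq_right, max_eq_left]
    exact (hE.1 ω).apply v u

lemma row_mgf {n k : ℕ} {p q : ℝ} (hq : 0 ≤ q) (hpq : q < p) (hp : p ≤ 1)
    {cl : Fin n → Fin k}
    {E : Ω → Matrix (Fin n) (Fin n) ℝ} (hE : NoiseModel p q cl E) (u : Fin n)
    (a : Fin n → ℝ) (θ : ℝ) (ha : ∀ v, |θ * a v| ≤ 1) :
    ∫⁻ ω, ENNReal.ofReal (Real.exp (θ * ∑ v, a v * E ω u v)) ≤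
      ENNReal.ofReal (Real.exp (θ ^ 2 * (p * ∑ v, a v ^ 2))) := by
  have h1 : ∀ ω, ENNReal.ofReal (Real.exp (θ * ∑ v, a v * E ω u v)) =
      ∏ v, ENNReal.ofReal (Real.exp (θ * a v * E ω u v)) := by
    intro ω
    rw [← ENNReal.ofReal_prod_of_nonneg (fun _ _ => (Real.exp_pos _).le), ← Real.exp_sum,
      Finset.mul_sum]
    simp only [mul_assoc]
  simp_rw [h1]
  have h2 := (row_indep hE u).comp (fun v x => ENNReal.ofReal (Real.exp (θ * a v * x)))
    (fun v => by fun_prop)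
  have h3 := lintegral_prod_eq_prod_lintegral_of_indepFun Finset.univ _ h2
    (fun v => by
      have := hE.2.1 u v
      simp only [Function.comp_def]
      fun_prop)
  simp only [Function.comp_def] at h3
  rw [h3]
  calc ∏ v, ∫⁻ ω, ENNReal.ofReal (Real.exp (θ * a v * E ω u v))
      ≤ ∏ v, ENNReal.ofReal (Real.exp (p * (θ * a v) ^ 2)) :=
        Finset.prod_le_prod' fun v _ => noise_mgf hq hpq hp hE u v (ha v)
    _ = _ := by
        rw [← ENNReal.ofReal_prod_of_nonneg (fun _ _ => (Real.exp_pos _).le), ← Real.exp_sum]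
        congr 2
        rw [Finset.mul_sum, Finset.mul_sum]
        refine Finset.sum_congr rfl fun v _ => by ring

lemma row_tail_one {n k : ℕ} {p q : ℝ} (hq : 0 ≤ q) (hpq : q < p) (hp : p ≤ 1)
    {cl : Fin n → Fin k}
    {E : Ω → Matrix (Fin n) (Fin n) ℝ} (hE : NoiseModel p q cl E) (u : Fin n)
    (a : Fin n → ℝ) (S L s : ℝ) (hs : |s| = 1) (hS : 0 < S)
    (ha : ∀ v, |a v| ≤ S) (ha2 : p * ∑ v, a v ^ 2 ≤ L * S ^ 2) :
    ℙ {ω | 8 * L * S < s * ∑ v, a v * E ω u v} ≤ ENNReal.ofReal (Real.exp (-(7 * L))) := by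
  have hs2 : s ^ 2 = 1 := by rw [← sq_abs, hs]; norm_num
  have h1 := row_mgf hq hpq hp hE u a (s / S) (by
    intro v
    rw [abs_mul, abs_div, hs, abs_of_pos hS, one_div, inv_mul_le_iff₀ hS]
    simpa using ha v)
  have h2 : (s / S) ^ 2 * (p * ∑ v, a v ^ 2) ≤ L := by
    rw [div_pow, hs2, one_div, inv_mul_le_iff₀ (by positivity)]
    linarith
  have h3 : ∫⁻ ω, ENNReal.ofReal (Real.exp (s / S * ∑ v, a v * E ω u v)) ≤
      ENNReal.ofReal (Real.exp L) :=
    h1.trans (ENNReal.ofReal_le_ofReal (Real.exp_le_exp.mpr h2))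
  have h4 := meas_ge_le_lintegral_div (μ := (ℙ : Measure Ω))
    (f := fun ω => ENNReal.ofReal (Real.exp (s / S * ∑ v, a v * E ω u v)))
    (by
      have := hE.2.1 u
      apply Measurable.aemeasurable
      fun_prop) (ε := ENNReal.ofReal (Real.exp (8 * L))) (by simp [Real.exp_pos]) (by simp)
  calc ℙ {ω | 8 * L * S < s * ∑ v, a v * E ω u v}
      ≤ ℙ {ω | ENNReal.ofReal (Real.exp (8 * L)) ≤
          ENNReal.ofReal (Real.exp (s / S * ∑ v, a v * E ω u v))} := by
        apply measure_mono
        intro ω hω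
        simp only [Set.mem_ofPred_eq] at hω ⊢
        apply ENNReal.ofReal_le_ofReal
        apply Real.exp_le_exp.mpr
        rw [div_mul_eq_mul_div, le_div_iff₀ hS]
        exact hω.le
    _ ≤ _ := h4
    _ ≤ ENNReal.ofReal (Real.exp L) / ENNReal.ofReal (Real.exp (8 * L)) := by gcongr
    _ = _ := by
        rw [← ENNReal.ofReal_div_of_pos (Real.exp_pos _), ← Real.exp_sub]
        congr 2; ring

lemma row_tail {n k : ℕ} {p q : ℝ} (hq : 0 ≤ q) (hpq : q < p) (hp : p ≤ 1)
    {cl : Fin n → Fin k}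
    {E : Ω → Matrix (Fin n) (Fin n) ℝ} (hE : NoiseModel p q cl E) (u : Fin n)
    (a : Fin n → ℝ) (S L : ℝ) (hS : 0 < S)
    (ha : ∀ v, |a v| ≤ S) (ha2 : p * ∑ v, a v ^ 2 ≤ L * S ^ 2) :
    ℙ {ω | 8 * L * S < |∑ v, a v * E ω u v|} ≤ ENNReal.ofReal (2 * Real.exp (-(7 * L))) := by
  have h1 := row_tail_one hq hpq hp hE u a S L 1 (by simp) hS ha ha2
  have h2 := row_tail_one hq hpq hp hE u a S L (-1) (by simp) hS ha ha2
  calc _ ≤ ℙ ({ω | 8 * L * S < 1 * ∑ v, a v * E ω u v} ∪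
        {ω | 8 * L * S < (-1) * ∑ v, a v * E ω u v}) := by
        apply measure_mono
        intro ω hω
        simp only [Set.mem_ofPred_eq, Set.mem_union] at hω ⊢
        rcases lt_abs.mp hω with h | h
        · left; linarith
        · right; linarith
    _ ≤ _ := measure_union_le _ _
    _ ≤ _ := add_le_add h1 h2
    _ = _ := by
        rw [← ENNReal.ofReal_add (Real.exp_pos _).le (Real.exp_pos _).le]
        congr 1; ring

/-- Matrix with row and column `u` zeroed, reconstructed from upper-triangular data. -/
noncomputable def recon {n : ℕ} (u : Fin n)
    (f : {e : {e : Fin n × Fin n // e.1 ≤ e.2} // ¬ (e.1.1 = u ∨ e.1.2 = u)} → ℝ) :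
    Matrix (Fin n) (Fin n) ℝ :=
  Matrix.of fun v w => if h : ¬ (min v w = u ∨ max v w = u) then
    f ⟨⟨(min v w, max v w), min_le_max⟩, h⟩ else 0

lemma aV_congr {n : ℕ} (E F : Matrix (Fin n) (Fin n) ℝ) (u : Fin n) (x : Fin n → ℝ)
    (h : ∀ v w, v ≠ u → w ≠ u → E v w = F v w) (j : ℕ) : aV E u x j = aV F u x j := by
  induction j with
  | zero => rfl
  | succ j ih =>
    simp only [aV]
    ext v
    by_cases hv : v = u
    · subst hv; simp
    · simp only [Function.update_of_ne hv, ← ih, Matrix.mulVec, dotProduct]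
      refine Finset.sum_congr rfl fun w _ => ?_
      by_cases hw : w = u
      · subst hw; simp [aV_self]
      · rw [h v w hv hw]

lemma aV_meas {n : ℕ} {X : Type*} [MeasurableSpace X] (F : X → Matrix (Fin n) (Fin n) ℝ)
    (hF : ∀ v w, Measurable fun y => F y v w) (u : Fin n) (x : Fin n → ℝ) (j : ℕ) (v : Fin n) :
    Measurable fun y => aV (F y) u x j v := by
  induction j generalizing v with
  | zero => simp only [aV]; exact measurable_const
  | succ j ih =>
    simp only [aV]
    by_cases hv : v = u
    · subst hv; simp
    · simp only [Function.update_of_ne hv, Matrix.mulVec, dotProduct]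
      exact Finset.measurable_sum _ fun w _ => (hF v w).mul (ih w)

lemma row_aV_indep {n k : ℕ} {p q : ℝ} {cl : Fin n → Fin k}
    {E : Ω → Matrix (Fin n) (Fin n) ℝ} (hE : NoiseModel p q cl E) (u : Fin n)
    (x : Fin n → ℝ) (j : ℕ) :
    IndepFun (fun ω v => E ω u v) (fun ω => aV (E ω) u x j) ℙ := by
  classical
  let ι := {e : Fin n × Fin n // e.1 ≤ e.2}
  let S : Finset ι := Finset.univ.filter fun e => e.1.1 = u ∨ e.1.2 = u
  let T : Finset ι := Finset.univ.filter fun e => ¬ (e.1.1 = u ∨ e.1.2 = u)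
  have hST : Disjoint S T := Finset.disjoint_filter_filter_not _ _ _
  have h := hE.2.2.1.indepFun_finset S T hST (fun e => hE.2.1 _ _)
  let φ : (S → ℝ) → (Fin n → ℝ) := fun f v =>
    f ⟨⟨(min u v, max u v), min_le_max⟩, by
      simp only [S, Finset.mem_filter, Finset.mem_univ, true_and]
      rcases le_total u v with h | h <;> simp [h]⟩
  let ρ : (T → ℝ) → Matrix (Fin n) (Fin n) ℝ := fun f =>
    recon u fun e => f ⟨e.1, by simpa [T] using e.2⟩
  have hρ : ∀ v w, Measurable fun f => ρ f v w := by
    intro v w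
    simp only [ρ, recon, Matrix.of_apply]
    split_ifs
    · exact measurable_const
    · exact measurable_pi_apply _
  have hφ : Measurable φ := measurable_pi_lambda _ fun v => measurable_pi_apply _
  have hψ : Measurable fun f => aV (ρ f) u x j :=
    measurable_pi_lambda _ fun v => aV_meas ρ hρ u x j v
  have h2 := h.comp hφ hψ
  convert h2 using 1
  · ext ω v
    simp only [φ, Function.comp]
    rcases le_total u v with h1 | h1
    · simp [h1]
    · simp only [h1, min_eq_right, max_eq_left]
      exact (hE.1 ω).apply v u
  · ext1 ω
    simp only [Function.comp]
    apply aV_congr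
    intro v w hv hw
    simp only [ρ, recon, Matrix.of_apply]
    rcases le_total v w with h1 | h1
    · simp [h1, hv, hw]
    · simp only [h1, min_eq_right, max_eq_left, hv, hw, or_self, not_false_eq_true, dite_true]
      exact (hE.1 ω).apply w v

lemma bern_prob {n k : ℕ} {p q : ℝ} (hq : 0 ≤ q) (hpq : q < p) (hp : p ≤ 1)
    {cl : Fin n → Fin k}
    {E : Ω → Matrix (Fin n) (Fin n) ℝ} (hE : NoiseModel p q cl E) (u : Fin n)
    (x : Fin n → ℝ) (j : ℕ) (S L : ℝ) (hS : 0 < S) :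
    ℙ {ω | ¬ Bern (E ω) u x p L S j} ≤ ENNReal.ofReal (2 * Real.exp (-(7 * L))) := by
  have hind := row_aV_indep hE u x j
  have hmw : Measurable fun ω v => E ω u v := measurable_pi_lambda _ fun v => hE.2.1 u v
  have hma : Measurable fun ω => aV (E ω) u x j :=
    measurable_pi_lambda _ fun v => aV_meas E hE.2.1 u x j v
  rw [indepFun_iff_map_prod_eq_prod_map_map hmw.aemeasurable hma.aemeasurable] at hind
  let B : Set ((Fin n → ℝ) × (Fin n → ℝ)) :=
    {z | (∀ v, |z.2 v| ≤ S) ∧ p * ∑ v, z.2 v ^ 2 ≤ L * S ^ 2 ∧ 8 * L * S < |∑ v, z.2 v * z.1 v|}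
  have hB : MeasurableSet B := by
    apply MeasurableSet.inter
    · have : {z : (Fin n → ℝ) × (Fin n → ℝ) | ∀ v, |z.2 v| ≤ S} = ⋂ v, {z | |z.2 v| ≤ S} := by
        ext; simp
      change MeasurableSet {z : (Fin n → ℝ) × (Fin n → ℝ) | ∀ v, |z.2 v| ≤ S}
      rw [this]
      exact MeasurableSet.iInter fun v => measurableSet_le (by fun_prop) (by fun_prop)
    apply MeasurableSet.inter
    · change MeasurableSet {z : (Fin n → ℝ) × (Fin n → ℝ) | p * ∑ v, z.2 v ^ 2 ≤ L * S ^ 2}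
      exact measurableSet_le (by fun_prop) (by fun_prop)
    · change MeasurableSet {z : (Fin n → ℝ) × (Fin n → ℝ) |
        8 * L * S < |∑ v, z.2 v * z.1 v|}
      exact measurableSet_lt (by fun_prop) (by fun_prop)
  have h1 : {ω | ¬ Bern (E ω) u x p L S j} = (fun ω => ((fun v => E ω u v), aV (E ω) u x j)) ⁻¹' B := by
    ext ω
    simp only [Bern, kap, Set.mem_ofPred_eq, Set.mem_preimage, B, Matrix.mulVec, dotProduct]
    push Not
    simp only [mul_comm (E ω u _)]
  rw [h1, ← Measure.map_apply (hmw.prodMk hma) hB, hind, Measure.prod_apply_symm hB]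
  have : ∀ a, (Measure.map (fun ω v => E ω u v) ℙ) ((fun w => (w, a)) ⁻¹' B) ≤
      ENNReal.ofReal (2 * Real.exp (-(7 * L))) := by
    intro a
    rw [Measure.map_apply hmw (hB.preimage (by fun_prop))]
    by_cases ha : (∀ v, |a v| ≤ S) ∧ p * ∑ v, a v ^ 2 ≤ L * S ^ 2
    · refine le_trans (measure_mono ?_) (row_tail hq hpq hp hE u a S L hS ha.1 ha.2)
      intro ω hω
      exact hω.2.2
    · have : (fun ω v => E ω u v) ⁻¹' ((fun w => (w, a)) ⁻¹' B) = ∅ := by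
        ext ω
        simp only [Set.mem_preimage, Set.mem_empty_iff_false, iff_false]
        intro h
        exact ha ⟨h.1, h.2.1⟩
      rw [this]; simp
  have hpm : IsProbabilityMeasure (Measure.map (fun ω => aV (E ω) u x j) ℙ) :=
    Measure.isProbabilityMeasure_map hma.aemeasurable
  calc _ ≤ ∫⁻ _, ENNReal.ofReal (2 * Real.exp (-(7 * L)))
        ∂(Measure.map (fun ω => aV (E ω) u x j) ℙ) := lintegral_mono fun a => this a
    _ = _ := by simp

end prob
end SBM

namespace SBM
section final
open scoped Matrix.Norms.L2Operator

lemma row_l1 {n k : ℕ} {p q L b : ℝ} (hq : 0 ≤ q) (hpq : q < p) {cl : Fin n → Fin k}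
    {E : Matrix (Fin n) (Fin n) ℝ}
    (hval : ∀ u v : Fin n, E u v = 1 - meanMatrix n k p q cl u v ∨
      E u v = -meanMatrix n k p q cl u v)
    (hp : p ≤ 1) (hL : 1 ≤ L) (hb : 5 * L ≤ b) (hb2 : b ^ 2 = n * p) (u : Fin n)
    (hB : Bern E u (fun _ => 1) p L b 0) : ∑ v, |E u v| ≤ 4 * b ^ 2 := by
  have hE1 : ∀ v, |E u v| ≤ 2 * p + E u v := by
    intro v
    obtain ⟨h0, h1⟩ := mean_bounds hq hpq cl u v
    rcases hval u v with h | h <;> rw [h]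
    · rw [abs_of_nonneg (by linarith)]; linarith
    · rw [abs_neg, abs_of_nonneg h0]; linarith
  have hu : E u u ≤ 1 := by
    obtain ⟨h0, h1⟩ := mean_bounds hq hpq cl u u
    rcases hval u u with h | h <;> rw [h] <;> linarith
  have hk := hB (by
    intro v
    by_cases hv : v = u
    · subst hv; simp [aV]; linarith
    · simp [aV, hv]; linarith) (by
    have : ∑ v, aV E u (fun _ => 1) 0 v ^ 2 ≤ ∑ v : Fin n, (1 : ℝ) := by
      apply Finset.sum_le_sum
      intro v _
      by_cases hv : v = u
      · subst hv; simp [aV]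
      · simp [aV, hv]
    simp only [Finset.sum_const, Finset.card_univ, Fintype.card_fin, nsmul_eq_mul, mul_one] at this
    have h2 : p * ∑ v, aV E u (fun _ => 1) 0 v ^ 2 ≤ p * n :=
      mul_le_mul_of_nonneg_left this (by linarith)
    nlinarith [sq_nonneg b])
  have hs : ∑ v, E u v = kap E u (fun _ => 1) 1 + E u u := by
    simp only [kap, aV, Matrix.mulVec, dotProduct]
    rw [← Finset.add_sum_erase _ _ (Finset.mem_univ u),
      ← Finset.add_sum_erase (a := u) (s := Finset.univ)
        (f := fun v => E u v * Function.update (fun _ => (1 : ℝ)) u 0 v) (Finset.mem_univ u)]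
    simp only [Function.update_self, mul_zero, zero_add]
    rw [add_comm]
    congr 1
    refine Finset.sum_congr rfl fun v hv => ?_
    rw [Function.update_of_ne (Finset.ne_of_mem_erase hv), mul_one]
  have h3 : ∑ v, |E u v| ≤ ∑ v, (2 * p + E u v) := Finset.sum_le_sum fun v _ => hE1 v
  rw [Finset.sum_add_distrib, hs] at h3
  simp only [Finset.sum_const, Finset.card_univ, Fintype.card_fin, nsmul_eq_mul] at h3
  have h4 := (abs_le.mp hk).2
  simp only [zero_add] at h4
  nlinarith

set_option maxHeartbeats 2000000 in
lemma good_bound {n k : ℕ} (hn : 0 < n) (hk : 2 ≤ k) {p q : ℝ} (hq : 0 ≤ q) (hpq : q < p)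
    (hp : p ≤ 1) {cl : Fin n → Fin k} (hbal : Balanced n k cl)
    {L b τ β : ℝ} {r : ℕ} (hLdef : L = Real.log n) (hL : 2 ≤ L)
    (hbdef : b = √(n * p)) (hτ : τ = 32 * L) (hβ : β = 96 * L ^ 2 * b) (hr : r = ⌈L⌉₊)
    (hblow : 100000 * k * L ^ 6 ≤ b) (hmu : 100000 * b * L ^ 6 ≤ (p - q) * ((n : ℝ) / k))
    {lamG : Fin n → ℝ} {vG : Fin n → Fin n → ℝ}
    (hdecG : IsSpectralDecomp (meanMatrix n k p q cl) lamG vG)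
    {E : Matrix (Fin n) (Fin n) ℝ} (hsym : E.IsSymm)
    (hval : ∀ u v : Fin n, E u v = 1 - meanMatrix n k p q cl u v ∨
      E u v = -meanMatrix n k p q cl u v)
    (hB1 : ∀ w, ∀ j ≤ 2 * r, ∀ u, Bern E u (bas w) p L (Sc 1 τ b β j) j)
    (hB2 : ∀ c, ∀ j ≤ 2 * r, ∀ u,
      Bern E u (ind cl c) p L (Sc (√(clusterSize cl c * p)) τ b β j) j)
    (hB3 : ∀ u, Bern E u (fun _ => 1) p L b 0) (u : Fin n) :
    SBM.enorm ((phiM (lamG ⟨0, hn⟩) ((p - q) * ((n : ℝ) / k)) r (meanMatrix n k p q cl + E) -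
      phiM (lamG ⟨0, hn⟩) ((p - q) * ((n : ℝ) / k)) r (meanMatrix n k p q cl)) *ᵥ (column E u)) ≤
      7000000 * (√((k : ℝ) * p) * L ^ 2 + 1 / L) := by
  have hp0 : 0 < p := by linarith
  have hk0 : 0 < k := by omega
  have hkR : (2 : ℝ) ≤ k := by exact_mod_cast hk
  have hnR : (0 : ℝ) < n := by exact_mod_cast hn
  have hL1 : 1 ≤ L := by linarith
  have hL6 : L ≤ L ^ 6 := le_self_pow₀ hL1 (by norm_num)
  have hbL : 5 * L ≤ b := by nlinarith
  have hb1 : 1 ≤ b := by linarith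
  have hb2 : b ^ 2 = n * p := by rw [hbdef, Real.sq_sqrt (by positivity)]
  have hβ0 : 0 ≤ β := by rw [hβ]; positivity
  have hrL : L ≤ r := by rw [hr]; exact Nat.le_ceil L
  have hrL2 : (r : ℝ) ≤ L + 1 := by rw [hr]; exact (Nat.ceil_lt_add_one (by linarith)).le
  have hr1 : 1 ≤ r := by
    have : (1 : ℝ) ≤ r := by linarith
    exact_mod_cast this
  have hJ : ((2 * r : ℕ) : ℝ) * τ * b ≤ β := by
    rw [hτ, hβ]; push_cast
    have : 2 * (r : ℝ) * (32 * L) ≤ 96 * L ^ 2 := by nlinarith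
    exact mul_le_mul_of_nonneg_right this (by linarith)
  have hβ2 : 64 * L * b ≤ β := by
    rw [hβ]
    exact mul_le_mul_of_nonneg_right (by nlinarith) (by linarith)
  have habs : ∀ u v, |E u v| ≤ 1 := by
    intro u v
    obtain ⟨h0, h1⟩ := mean_bounds hq hpq cl u v
    rcases hval u v with h | h <;> rw [h, abs_le] <;> constructor <;> linarith
  have hEnt := ent_all hL1 hp0.le hp hb2 hτ hb1 hJ hβ2
    (fun u => row_l1 hq hpq hval hp hL1 hbL hb2 u (hB3 u)) habs hB1
  have hnorm : ‖E‖ ≤ 3 * β := by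
    have hclog : r ≤ 2 ^ Nat.clog 2 r := Nat.le_pow_clog (by norm_num) r
    have hclog2 : 2 ^ Nat.clog 2 r ≤ 2 * r := by
      rcases Nat.lt_or_ge 1 r with h | h
      · have h1 := Nat.pow_pred_clog_lt_self (b := 2) (by norm_num) h
        have h2 : 0 < Nat.clog 2 r := Nat.clog_pos (by norm_num) h
        obtain ⟨m, hm⟩ := Nat.exists_eq_succ_of_ne_zero h2.ne'
        rw [hm] at h1 ⊢
        simp only [Nat.pred_succ, Nat.succ_eq_add_one] at h1 ⊢
        rw [pow_succ]; omega
      · have : r = 1 := by omega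
        subst this; simp
    apply norm_of_ent E hsym β hβ0 (Nat.clog 2 r)
    · have h1 : (n : ℝ) = Real.exp L := by rw [hLdef, Real.exp_log hnR]
      have h2 : L ≤ ((2 ^ Nat.clog 2 r : ℕ) : ℝ) := hrL.trans (by exact_mod_cast hclog)
      rw [h1]
      calc Real.exp L ≤ Real.exp (((2 ^ Nat.clog 2 r : ℕ) : ℝ) * 1) :=
            Real.exp_le_exp.mpr (by linarith)
        _ = Real.exp 1 ^ (2 ^ Nat.clog 2 r) := by rw [Real.exp_nat_mul]
        _ ≤ _ := pow_le_pow_left₀ (Real.exp_pos _).le (by linarith [Real.exp_one_lt_d9]) _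
    · intro u v
      have hpos : 0 < 2 ^ Nat.clog 2 r := by positivity
      obtain ⟨m, hm⟩ := Nat.exists_eq_succ_of_ne_zero hpos.ne'
      rw [hm]
      have h1 := hEnt m (by omega) v u
      refine h1.trans ?_
      rw [Nat.succ_eq_add_one, pow_succ' β]
      apply mul_le_mul_of_nonneg_right _ (pow_nonneg hβ0 _)
      have h3 : τ * b ≤ β := by rw [hτ]; nlinarith
      refine le_trans ?_ h3
      apply mul_le_mul_of_nonneg_left _ (by rw [hτ]; linarith)
      split_ifs <;> linarith
  have hsl : ∀ c, (n : ℝ) / (2 * k) ≤ clusterSize cl c := by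
    intro c
    refine le_trans ?_ (hbal c).1
    rw [← hLdef]
    have h1 : 1 / (16 * L) ≤ 1 / 2 := by
      apply one_div_le_one_div_of_le <;> linarith
    have h2 : (n : ℝ) / (2 * k) = 1 / 2 * ((n : ℝ) / k) := by field_simp
    rw [h2]
    exact mul_le_mul_of_nonneg_right (by linarith) (by positivity)
  have hσ : ∀ c, 1 ≤ √(clusterSize cl c * p) := by
    intro c
    rw [Real.one_le_sqrt]
    have h1 := mul_le_mul_of_nonneg_right (hsl c) hp0.le
    refine le_trans ?_ h1
    rw [div_mul_eq_mul_div, ← hb2, le_div_iff₀ (by positivity)]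
    have : (2 : ℝ) * k ≤ b := by nlinarith
    nlinarith
  set mu := (p - q) * ((n : ℝ) / k) with hmudef
  have hmu0 : 0 < mu := by
    have : 0 < 100000 * b * L ^ 6 := by positivity
    linarith
  set ε := 3 * β / mu with hε
  have hεmu : ε * mu = 3 * β := by rw [hε]; field_simp
  have hε0 : 0 ≤ ε := by positivity
  have hεL : ε ≤ 1 / (300 * L) := by
    rw [hε, div_le_div_iff₀ hmu0 (by positivity), hβ]
    have h3 : L ^ 3 ≤ L ^ 6 := pow_le_pow_right₀ hL1 (by norm_num)
    have : b * L ^ 3 ≤ b * L ^ 6 := mul_le_mul_of_nonneg_left h3 (by linarith)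
    nlinarith
  have hε300 : ε ≤ 1 / 300 := by
    refine hεL.trans ?_
    apply one_div_le_one_div_of_le <;> linarith
  have hδ : 0 ≤ 1 / (16 * L) := by positivity
  have hcol : column E u = E *ᵥ bas u := by
    ext v
    simp [column, bas, Matrix.mulVec, dotProduct]
  have hPb : ∀ m ≤ 2 * r, SBM.enorm (Pm cl *ᵥ ((E ^ m) *ᵥ column E u)) ≤
      (3 * τ * √(k * p)) * β ^ m := by
    intro m hm
    rw [hcol, Matrix.mulVec_mulVec (bas u) (E ^ m) E, ← pow_succ]
    have := Pm_bound hn hk0 cl ((E ^ (m + 1)) *ᵥ bas u) u (τ * β ^ m) p hp0.le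
      (mul_nonneg (by rw [hτ]; linarith) (pow_nonneg hβ0 _)) hsl (by
        intro c
        have h1 := f_all hL1 hp0.le hb2 (hσ c) hτ hb1 hJ hβ2 (x := ind cl c)
          (by intro v; simp only [ind]; split_ifs <;> simp)
          (by
            rw [Real.sq_sqrt (by positivity)]
            have : ∑ v, ind cl c v ^ 2 = clusterSize cl c := by
              simp [ind, clusterSize]
            rw [this, mul_comm]) hEnt (hB2 c) m hm u
        have h2 : ind cl c ⬝ᵥ ((E ^ (m + 1)) *ᵥ bas u) = ((E ^ (m + 1)) *ᵥ ind cl c) u := by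
          have hs : (E ^ (m + 1)).IsSymm := hsym.pow _
          simp only [Matrix.mulVec, dotProduct, bas, mul_ite, mul_one, mul_zero,
            Finset.sum_ite_eq', Finset.mem_univ, if_true]
          refine Finset.sum_congr rfl fun v _ => ?_
          rw [hs.apply u v, mul_comm]
        rw [h2, ← hbdef]
        refine h1.trans (le_of_eq ?_)
        ring)
    refine this.trans (le_of_eq ?_)
    ring
  have hmain := det_main (meanMatrix n k p q cl) E (Pm cl) (column E u) (lamG ⟨0, hn⟩) mu
    (3 * τ * √(k * p)) β (1 / (16 * L)) ε r hr1 hmu0 (mu_le_lam hn hk0 hq hpq hdecG)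
    (norm_mean_le hn hq hpq hdecG) (mean_mul_Pm p q cl) hδ
    (by rw [div_le_one (by positivity)]; linarith)
    (norm_psi_le hn hk0 hq hpq hdecG _ hδ (fun c => by
      rw [hLdef]; exact (hbal c).2)) hε0 (by linarith) (by rw [hεmu]; exact hnorm) hβ0
    (by rw [hεmu]; linarith) (by rw [hτ]; positivity) hPb
  refine hmain.trans ?_
  have hpow : (1 + 1 / (16 * L) + 5 * ε) ^ r ≤ 3 := by
    have h1 : 1 + 1 / (16 * L) + 5 * ε ≤ Real.exp (1 / (4 * L)) := by
      refine le_trans ?_ (Real.add_one_le_exp _)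
      have h2 : 1 / (300 * L) = 1 / 300 * (1 / L) := by field_simp
      have h3 : 1 / (16 * L) = 1 / 16 * (1 / L) := by field_simp
      have h4 : 1 / (4 * L) = 1 / 4 * (1 / L) := by field_simp
      have h5 : 0 ≤ 1 / L := by positivity
      rw [h2] at hεL
      rw [h3, h4]
      linarith
    calc _ ≤ Real.exp (1 / (4 * L)) ^ r := pow_le_pow_left₀ (by positivity) h1 _
      _ = Real.exp (r * (1 / (4 * L))) := by rw [Real.exp_nat_mul]
      _ ≤ Real.exp 1 := by
        apply Real.exp_le_exp.mpr
        rw [mul_one_div, div_le_one (by positivity)]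
        linarith
      _ ≤ 3 := by linarith [Real.exp_one_lt_d9]
  have hw : SBM.enorm (column E u) ≤ Real.exp L := by
    have h1 : (n : ℝ) = Real.exp L := by rw [hLdef, Real.exp_log hnR]
    rw [← h1]
    unfold SBM.enorm
    rw [Real.sqrt_le_left hnR.le]
    calc ∑ i, column E u i ^ 2 ≤ ∑ i : Fin n, (1 : ℝ) := by
          apply Finset.sum_le_sum
          intro i _
          rw [sq_le_one_iff_abs_le_one]
          exact habs i u
      _ = n := by simp
      _ ≤ (n : ℝ) ^ 2 := by
          have : (1 : ℝ) ≤ n := by exact_mod_cast hn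
          nlinarith
  have h3ε : (3 * ε) ^ r ≤ Real.exp (-4 * L) := by
    have h1 : 3 * ε ≤ Real.exp (-4) := by
      have h2 : Real.exp 4 ≤ 100 := by
        have : Real.exp 4 = Real.exp 1 ^ 4 := by rw [← Real.exp_nat_mul]; norm_num
        rw [this]
        calc Real.exp 1 ^ 4 ≤ 3 ^ 4 :=
              pow_le_pow_left₀ (Real.exp_pos _).le (by linarith [Real.exp_one_lt_d9]) _
          _ ≤ 100 := by norm_num
      rw [Real.exp_neg]
      have := inv_anti₀ (Real.exp_pos 4) h2
      refine le_trans ?_ this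
      linarith
    calc (3 * ε) ^ r ≤ Real.exp (-4) ^ r := pow_le_pow_left₀ (by positivity) h1 _
      _ = Real.exp (r * (-4)) := by rw [Real.exp_nat_mul]
      _ ≤ _ := Real.exp_le_exp.mpr (by linarith)
  have hsec : (3 * ε) ^ r * SBM.enorm (column E u) ≤ 1 / L := by
    calc _ ≤ Real.exp (-4 * L) * Real.exp L :=
          mul_le_mul h3ε hw (Real.sqrt_nonneg _) (Real.exp_pos _).le
      _ = Real.exp (-(3 * L)) := by rw [← Real.exp_add]; congr 1; ring
      _ ≤ 1 / L := by
          rw [Real.exp_neg, one_div]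
          apply inv_anti₀ (by linarith)
          linarith [Real.add_one_le_exp (3 * L)]
  have hfirst : 7 * (3 * τ * √(k * p)) * (1 + 1 / (16 * L) + 5 * ε) ^ r ≤
      7000000 * (√((k : ℝ) * p) * L ^ 2) := by
    have hs := Real.sqrt_nonneg ((k : ℝ) * p)
    calc _ ≤ 7 * (3 * τ * √(k * p)) * 3 :=
          mul_le_mul_of_nonneg_left hpow (by rw [hτ]; positivity)
      _ = 2016 * (√(k * p) * L) := by rw [hτ]; ring
      _ ≤ 2016 * (√(k * p) * L ^ 2) := by
          gcongr
          nlinarith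
      _ ≤ _ := by
          have : 0 ≤ √((k : ℝ) * p) * L ^ 2 := by positivity
          linarith
  have hl : 0 ≤ 1 / L := by positivity
  linarith

/-- Test vectors for the union bound. -/
noncomputable def tv {n k : ℕ} (cl : Fin n → Fin k) : Option (Fin n ⊕ Fin k) → Fin n → ℝ
  | none => fun _ => 1
  | some (Sum.inl w) => bas w
  | some (Sum.inr c) => ind cl c

/-- Scales of the test vectors. -/
noncomputable def ts {n k : ℕ} (p b : ℝ) (cl : Fin n → Fin k) : Option (Fin n ⊕ Fin k) → ℝ
  | none => b
  | some (Sum.inl _) => 1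
  | some (Sum.inr c) => √(clusterSize cl c * p)

end final
end SBM

open SBM in
/-- There are constants `C, c > 0` such that: if the partition is balanced,
`k ≥ 2` and `n ≥ C·k²·p·(log n)¹²/(p−q)²`, then for every vertex `u`, with probability at
least `1 − c·n^{−2}` over `E`, `‖(φ(Ĝ) − φ(G))·E_u‖ ≤ 7·10⁶(√(kp)(log n)² + 1/log n)`. -/
theorem poly_difference_noise_bound :
    ∃ C > (0 : ℝ), ∃ c > (0 : ℝ),
      ∀ (n k : ℕ) (hn : 0 < n) (hk : 2 ≤ k)
        (p q : ℝ) (hq : 0 ≤ q) (hpq : q < p) (hp : p ≤ 1)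
        (cl : Fin n → Fin k) (hbal : Balanced n k cl)
        (hsize : (n : ℝ) ≥ C * k ^ 2 * p * (Real.log n) ^ 12 / (p - q) ^ 2)
        (lamG : Fin n → ℝ) (vG : Fin n → Fin n → ℝ)
        (hdecG : IsSpectralDecomp (meanMatrix n k p q cl) lamG vG)
        (Ω : Type) (_ : MeasureSpace Ω) (_ : IsProbabilityMeasure (ℙ : Measure Ω))
        (E : Ω → Matrix (Fin n) (Fin n) ℝ) (hE : NoiseModel p q cl E)
        (u : Fin n),
        ENNReal.ofReal (1 - c / (n : ℝ) ^ 2) ≤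
          ℙ {ω : Ω |
            SBM.enorm ((phiM (lamG ⟨0, hn⟩) ((p - q) * ((n : ℝ) / k)) ⌈Real.log n⌉₊
                  (meanMatrix n k p q cl + E ω) -
                phiM (lamG ⟨0, hn⟩) ((p - q) * ((n : ℝ) / k)) ⌈Real.log n⌉₊
                  (meanMatrix n k p q cl)).mulVec (column (E ω) u)) ≤
              7000000 * (Real.sqrt ((k : ℝ) * p) * (Real.log n) ^ 2 + 1 / Real.log n)} := by
  refine ⟨10 ^ 10, by norm_num, 100, by norm_num, ?_⟩
  intro n k hn hk p q hq hpq hp cl hbal hsize lamG vG hdecG Ω _ _ E hE u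
  have hnR : (0 : ℝ) < n := by exact_mod_cast hn
  have hn1 : (1 : ℝ) ≤ n := by exact_mod_cast hn
  have hp0 : 0 < p := by linarith
  have hk0 : 0 < k := by omega
  have hkR : (2 : ℝ) ≤ k := by exact_mod_cast hk
  rcases Nat.lt_or_ge n 8 with hn8 | hn8
  · have hn7 : (n : ℝ) ≤ 7 := by exact_mod_cast Nat.le_of_lt_succ hn8
    have : 1 - 100 / (n : ℝ) ^ 2 ≤ 0 := by
      rw [sub_nonpos, le_div_iff₀ (by positivity)]
      nlinarith
    rw [ENNReal.ofReal_of_nonpos this]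
    exact zero_le
  set A := {ω : Ω |
            SBM.enorm ((phiM (lamG ⟨0, hn⟩) ((p - q) * ((n : ℝ) / k)) ⌈Real.log n⌉₊
                  (meanMatrix n k p q cl + E ω) -
                phiM (lamG ⟨0, hn⟩) ((p - q) * ((n : ℝ) / k)) ⌈Real.log n⌉₊
                  (meanMatrix n k p q cl)).mulVec (column (E ω) u)) ≤
              7000000 * (Real.sqrt ((k : ℝ) * p) * (Real.log n) ^ 2 + 1 / Real.log n)} with hA
  obtain ⟨L, hL⟩ : ∃ L, L = Real.log n := ⟨_, rfl⟩
  obtain ⟨b, hb⟩ : ∃ b, b = √(n * p) := ⟨_, rfl⟩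
  obtain ⟨τ, hτ⟩ : ∃ τ, τ = 32 * L := ⟨_, rfl⟩
  obtain ⟨β, hβ⟩ : ∃ β, β = 96 * L ^ 2 * b := ⟨_, rfl⟩
  obtain ⟨r, hr⟩ : ∃ r, r = ⌈L⌉₊ := ⟨_, rfl⟩
  have hL2 : 2 ≤ L := by
    rw [hL, Real.le_log_iff_exp_le hnR]
    have h8 : (8 : ℝ) ≤ n := by exact_mod_cast hn8
    have : Real.exp 2 = Real.exp 1 ^ 2 := by rw [← Real.exp_nat_mul]; norm_num
    rw [this]
    nlinarith [Real.exp_one_lt_d9, Real.exp_pos 1]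
  have hpq0 : 0 < p - q := by linarith
  have hb0 : 0 < b := by rw [hb]; positivity
  rw [← hL, ge_iff_le, div_le_iff₀ (by positivity)] at hsize
  have hblow : 100000 * k * L ^ 6 ≤ b := by
    rw [hb]
    apply Real.le_sqrt_of_sq_le
    have h1 : (n : ℝ) * (p - q) ^ 2 ≤ n * p ^ 2 := by
      apply mul_le_mul_of_nonneg_left _ hnR.le
      apply pow_le_pow_left₀ hpq0.le; linarith
    have h2 : (10 ^ 10 * k ^ 2 * L ^ 12) * p ≤ (n * p) * p := by
      calc _ = 10 ^ 10 * (k : ℝ) ^ 2 * p * L ^ 12 := by ring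
        _ ≤ _ := hsize
        _ ≤ _ := h1
        _ = _ := by ring
    have h3 := le_of_mul_le_mul_right h2 hp0
    calc _ = (10 ^ 10 * (k : ℝ) ^ 2 * L ^ 12) := by ring
      _ ≤ _ := h3
  have hb2 : b ^ 2 = n * p := by rw [hb, Real.sq_sqrt (by positivity)]
  have hmu : 100000 * b * L ^ 6 ≤ (p - q) * ((n : ℝ) / k) := by
    apply le_of_sq_le_sq _ (by positivity)
    rw [← mul_div_assoc, div_pow, le_div_iff₀ (by positivity)]
    calc _ = (10 ^ 10 * (k : ℝ) ^ 2 * L ^ 12) * b ^ 2 := by ring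
      _ = (10 ^ 10 * (k : ℝ) ^ 2 * p * L ^ 12) * n := by rw [hb2]; ring
      _ ≤ (n * (p - q) ^ 2) * n := mul_le_mul_of_nonneg_right hsize hnR.le
      _ = _ := by ring
  have hs0 : ∀ c, 0 < (clusterSize cl c : ℝ) := by
    intro c
    refine lt_of_lt_of_le ?_ (hbal c).1
    rw [← hL]
    apply mul_pos _ (by positivity)
    rw [sub_pos, div_lt_one (by positivity)]
    linarith
  have hts : ∀ i, 0 < ts p b cl i := by
    intro i
    rcases i with _ | i | c
    · exact hb0
    · exact one_pos
    · exact Real.sqrt_pos.mpr (mul_pos (hs0 c) hp0)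
  have hβ0 : 0 < β := by rw [hβ]; positivity
  have hτ0 : 0 < τ := by rw [hτ]; linarith
  have hSc : ∀ i j, 0 < Sc (ts p b cl i) τ b β j := by
    intro i j
    have := hts i
    cases j <;> simp only [Sc] <;> positivity
  have hkn : k ≤ n := by
    have hsurj : Function.Surjective cl := by
      intro c
      have h := hs0 c
      have h' : 0 < clusterSize cl c := by exact_mod_cast h
      obtain ⟨v, hv⟩ := Finset.card_pos.mp h'
      exact ⟨v, (Finset.mem_filter.mp hv).2⟩
    simpa using Fintype.card_le_of_surjective cl hsurj
  have hrn : r ≤ n := by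
    rw [hr, Nat.ceil_le, hL]
    linarith [Real.log_le_sub_one_of_pos hnR]
  let bad : Fin n × Fin (2 * r + 1) × Option (Fin n ⊕ Fin k) → Set Ω := fun z =>
    {ω | ¬ Bern (E ω) z.1 (tv cl z.2.2) p L (Sc (ts p b cl z.2.2) τ b β z.2.1) z.2.1}
  have hsub : Aᶜ ≤ᵐ[ℙ] ⋃ z, bad z := by
    filter_upwards [noise_ae hE] with ω hval hω
    by_contra hnot
    have hgood : ∀ z, ω ∉ bad z := by
      intro z hz
      exact hnot (Set.mem_iUnion.mpr ⟨z, hz⟩)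
    have hg : ∀ i, ∀ j ≤ 2 * r, ∀ u,
        Bern (E ω) u (tv cl i) p L (Sc (ts p b cl i) τ b β j) j := by
      intro i j hj u
      have := hgood (u, ⟨j, by omega⟩, i)
      exact not_not.mp this
    apply hω
    have := good_bound hn hk hq hpq hp hbal hL hL2 hb hτ hβ hr hblow hmu hdecG (hE.1 ω) hval
      (fun w j hj u => hg (some (Sum.inl w)) j hj u)
      (fun c j hj u => hg (some (Sum.inr c)) j hj u)
      (fun u => hg none 0 (by omega) u) u
    rw [hr, hL] at this
    exact this
  have hbad : ℙ Aᶜ ≤ ENNReal.ofReal (100 / (n : ℝ) ^ 2) := by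
    calc ℙ Aᶜ ≤ ℙ (⋃ z, bad z) := measure_mono_ae hsub
      _ ≤ ∑ z, ℙ (bad z) := measure_iUnion_fintype_le _ _
      _ ≤ ∑ z : Fin n × Fin (2 * r + 1) × Option (Fin n ⊕ Fin k),
          ENNReal.ofReal (2 * Real.exp (-(7 * L))) :=
        Finset.sum_le_sum fun z _ => bern_prob hq hpq hp hE _ _ _ _ _ (hSc _ _)
      _ = ENNReal.ofReal ((n * ((2 * r + 1) * (n + k + 1))) * (2 * Real.exp (-(7 * L)))) := by
        rw [Finset.sum_const, nsmul_eq_mul,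
          ENNReal.ofReal_mul (p := (n : ℝ) * ((2 * r + 1) * (n + k + 1))) (by positivity)]
        congr 1
        rw [← ENNReal.ofReal_natCast]
        congr 1
        simp
      _ ≤ _ := by
        apply ENNReal.ofReal_le_ofReal
        have he : Real.exp (-(7 * L)) = 1 / (n : ℝ) ^ 7 := by
          rw [Real.exp_neg, hL, one_div]
          congr 1
          have : Real.exp (7 * Real.log n) = Real.exp (Real.log n) ^ 7 := by
            rw [← Real.exp_nat_mul]; norm_num
          rw [this, Real.exp_log hnR]
        rw [he]
        have hrn' : (r : ℝ) ≤ n := by exact_mod_cast hrn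
        have hkn' : (k : ℝ) ≤ n := by exact_mod_cast hkn
        have h1 : (n : ℝ) * ((2 * r + 1) * (n + k + 1)) ≤ n * ((3 * n) * (3 * n)) := by
          gcongr <;> linarith
        calc _ ≤ (n : ℝ) * ((3 * n) * (3 * n)) * (2 * (1 / (n : ℝ) ^ 7)) :=
              mul_le_mul_of_nonneg_right h1 (by positivity)
          _ = 18 / (n : ℝ) ^ 4 := by field_simp; ring
          _ ≤ 100 / (n : ℝ) ^ 2 := by
              apply div_le_div₀ (by norm_num) (by norm_num) (by positivity)
              exact pow_le_pow_right₀ hn1 (by norm_num)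
  have huniv : (1 : ENNReal) ≤ ℙ A + ℙ Aᶜ := by
    have := measure_univ_le_add_compl (μ := (ℙ : Measure Ω)) A
    rwa [measure_univ] at this
  rw [ENNReal.ofReal_sub _ (by positivity), ENNReal.ofReal_one]
  exact tsub_le_iff_right.mpr (huniv.trans (add_le_add le_rfl hbad))
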